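/- arXiv:2502.20666 — 7 statements merged into one kernel-verified Lean document; each statement's English description precedes it below -/
import Mathlib

section
/- Let X be a complex Banach space and L an invertible bounded linear operator on X. The following are equivalent: (1) L is expansive and has the shadowing property; (2) L is asymptotically expansive and has the shadowing property; (3) L is hyperbolic. -/
open Filter Topology

variable {X : Type*} [NormedAddCommGroup X] [NormedSpace ℂ X] [CompleteSpace X]

/-- `L` has the shadowing property. -/
def ShadowingProperty (L : X ≃L[ℂ] X) : Prop :=
  ∀ ε > (0 : ℝ), ∃ δ > (0 : ℝ), ∀ x : ℤ → X,
    (∀ n : ℤ, ‖L (x n) - x (n + 1)‖ ≤ δ) →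
    ∃ p : X, ∀ n : ℤ, ‖(L ^ n) p - x n‖ ≤ ε

/-- `L` is expansive. -/
def Expansive (L : X ≃L[ℂ] X) : Prop :=
  ∃ ε > (0 : ℝ), ∀ x : X, (∀ n : ℤ, ‖(L ^ n) x‖ ≤ ε) → x = 0

/-- `L` is asymptotically expansive. -/
def AsymptoticallyExpansive (L : X ≃L[ℂ] X) : Prop :=
  ∃ ε > (0 : ℝ), ∀ x : X, (∀ n : ℕ, ‖(L ^ n) x‖ ≤ ε) →
    Tendsto (fun n : ℕ => (L ^ n) x) atTop (𝓝 0)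

/-- `L` is hyperbolic: its spectrum misses the unit circle. -/
def Hyperbolic (L : X ≃L[ℂ] X) : Prop :=
  ∀ z ∈ spectrum ℂ (L : X →L[ℂ] X), ‖z‖ ≠ 1

/-!
On bounded sequences `u : ℤ → X` consider the operator `(D u) n = L (u n) - u (n + 1)`, whose
kernel consists of the bounded orbits of `L`. It is the difference of two commuting operators:
composition with `L`, whose spectrum lies in that of `L`, and the shift, whose spectrum lies on the
unit circle. If `L` is hyperbolic these spectra are disjoint, so by Gelfand theory `D` is
invertible. Injectivity of `D` gives expansivity, surjectivity gives shadowing through the open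
mapping theorem, and a lower bound for `D`, tested on a linear ramp times an orbit bounded in the
future, makes that orbit decay.

Conversely, let `‖c‖ = 1`. Shadowing gives bounded solutions of `y (n + 1) = L (y n) - c ^ n • w`,
and the Cesàro means of `c⁻¹ ^ n • y n` are bounded approximate solutions of `L v - c • v = w`. So
`L - c` is onto by successive approximation, while an eigenvector for `c` would contradict either
form of expansivity.
-/

open scoped BoundedContinuousFunction NNReal

section BanachAlgebra

theorem isUnit_of_isUnit_coe_centralizer {R B : Type*} [CommSemiring R] [Semiring B] [Algebra R B]
    {s : Set B} {x : Subalgebra.centralizer R s} (hx : IsUnit (x : B)) : IsUnit x := by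
  obtain ⟨u, hu⟩ := hx
  have hinv : (↑u⁻¹ : B) ∈ Subalgebra.centralizer R s := fun g hg =>
    (Commute.units_inv_right (hu ▸ x.2 g hg : Commute g u)).eq
  exact ⟨⟨x, ⟨_, hinv⟩, Subtype.ext (by simp [← hu]), Subtype.ext (by simp [← hu])⟩, rfl⟩

variable {A : Type*} [NormedRing A] [CompleteSpace A]

theorem isUnit_sub_of_disjoint_spectrum [NormedAlgebra ℂ A] {a b : A} (hab : Commute a b)
    (h : Disjoint (spectrum ℂ a) (spectrum ℂ b)) : IsUnit (a - b) := by
  -- A bicommutant is commutative and closed under inverses, so spectra do not grow in it.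
  let B := Subalgebra.centralizer ℂ ({a, b} : Set A).centralizer
  have hcomm : ∀ x ∈ ({a, b} : Set A), ∀ y ∈ ({a, b} : Set A), x * y = y * x := by
    rintro x (rfl | rfl) y (rfl | rfl)
    exacts [rfl, hab, hab.symm, rfl]
  let : NormedCommRing B :=
    { (inferInstance : NormedRing B) with
      mul_comm := fun x y =>
        Subtype.ext (Set.centralizer_centralizer_comm_of_comm hcomm x x.2 y y.2) }
  have : CompleteSpace B :=
    (Set.isClosed_centralizer ({a, b} : Set A).centralizer).completeSpace_coe
  have hspec : ∀ x : B, spectrum ℂ x ⊆ spectrum ℂ (x : A) := fun x z hz hu =>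
    hz (isUnit_of_isUnit_coe_centralizer hu)
  let a' : B := ⟨a, Set.subset_centralizer_centralizer (by simp)⟩
  let b' : B := ⟨b, Set.subset_centralizer_centralizer (by simp)⟩
  by_contra hunit
  have hunit' : ¬IsUnit (a' - b') := fun hu => hunit (hu.map B.subtype)
  obtain ⟨φ, hφ⟩ := WeakDual.CharacterSpace.exists_apply_eq_zero hunit'
  have heq : φ a' = φ b' := sub_eq_zero.1 ((map_sub φ a' b').symm.trans hφ)
  refine Set.disjoint_left.1 h (hspec a' (AlgHom.apply_mem_spectrum φ a')) ?_
  exact heq ▸ hspec b' (AlgHom.apply_mem_spectrum φ b')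

theorem norm_eq_one_of_mem_spectrum_unit {𝕜 : Type*} [NormedField 𝕜] [NormedAlgebra 𝕜 A]
    {u : Aˣ} (hu : ‖(u : A)‖ ≤ 1) (hu' : ‖(↑u⁻¹ : A)‖ ≤ 1) {z : 𝕜}
    (hz : z ∈ spectrum 𝕜 (u : A)) : ‖z‖ = 1 := by
  have hone : ‖(1 : A)‖ ≤ 1 := by
    rw [← u.mul_inv]
    exact (norm_mul_le _ _).trans (mul_le_one₀ hu (norm_nonneg _) hu')
  have hball {a : A} {w : 𝕜} (ha : ‖a‖ ≤ 1) (hw : w ∈ spectrum 𝕜 a) : ‖w‖ ≤ 1 :=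
    (spectrum.norm_le_norm_mul_of_mem hw).trans (mul_le_one₀ ha (norm_nonneg _) hone)
  have hz0 : 0 < ‖z‖ := norm_pos_iff.2 (spectrum.ne_zero_of_mem_of_unit hz)
  have hinv := hball hu' (spectrum.inv₀_mem_inv_iff.2 hz)
  rw [norm_inv] at hinv
  exact (hball hu hz).antisymm ((inv_le_one₀ hz0).1 hinv)

end BanachAlgebra

section Orbits

variable {R M : Type*} [Semiring R] [TopologicalSpace M] [AddCommMonoid M] [Module R M]

theorem zpow_add_one_apply (L : M ≃L[R] M) (n : ℤ) (x : M) :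
    (L ^ (n + 1)) x = L ((L ^ n) x) := by
  rw [add_comm, zpow_one_add]
  rfl

theorem zpow_apply_zero_of_orbit {L : M ≃L[R] M} {u : ℤ → M} (hu : ∀ n, L (u n) = u (n + 1))
    (n : ℤ) : (L ^ n) (u 0) = u n := by
  induction n using Int.induction_on with
  | zero => rfl
  | succ n ih => rw [zpow_add_one_apply, ih, hu]
  | pred n ih =>
    apply L.injective
    rw [← zpow_add_one_apply, hu, sub_add_cancel, ih]

end Orbits

section OrbitDefect

variable {𝕜 E : Type*} [NontriviallyNormedField 𝕜] [NormedAddCommGroup E] [NormedSpace 𝕜 E]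

variable (𝕜 E) in
/-- Composition of bounded functions `α → E` with an operator on `E`, as an algebra homomorphism in
the operator. -/
noncomputable def postcompAlgHom (α : Type*) [TopologicalSpace α] :
    (E →L[𝕜] E) →ₐ[𝕜] (α →ᵇ E) →L[𝕜] (α →ᵇ E) where
  toFun T := T.compLeftContinuousBounded α
  map_one' := rfl
  map_mul' _ _ := rfl
  map_zero' := rfl
  map_add' _ _ := rfl
  commutes' _ := rfl

variable (𝕜 E) in
/-- The left shift `(u n) ↦ (u (n + 1))` of bounded two-sided sequences, as an invertible
operator. -/
noncomputable def shiftUnit : ((ℤ →ᵇ E) →L[𝕜] (ℤ →ᵇ E))ˣ where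
  val := BoundedContinuousFunction.compContinuousCLM E 𝕜 ⟨(· + 1), continuous_of_discreteTopology⟩
  inv := BoundedContinuousFunction.compContinuousCLM E 𝕜 ⟨(· - 1), continuous_of_discreteTopology⟩
  val_inv := by ext u n; simp
  inv_val := by ext u n; simp

theorem norm_eq_one_of_mem_spectrum_shiftUnit [CompleteSpace E] {z : 𝕜}
    (hz : z ∈ spectrum 𝕜 (shiftUnit 𝕜 E : (ℤ →ᵇ E) →L[𝕜] (ℤ →ᵇ E))) : ‖z‖ = 1 :=
  norm_eq_one_of_mem_spectrum_unit (BoundedContinuousFunction.norm_compContinuousCLM_le_one _)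
    (BoundedContinuousFunction.norm_compContinuousCLM_le_one _) hz

/-- The operator on bounded two-sided sequences measuring how far a sequence is from being an orbit
of `T`: it sends `(u n)` to `(T (u n) - u (n + 1))`. -/
noncomputable def orbitDefect (T : E →L[𝕜] E) : (ℤ →ᵇ E) →L[𝕜] (ℤ →ᵇ E) :=
  postcompAlgHom 𝕜 E ℤ T - shiftUnit 𝕜 E

theorem orbitDefect_apply (T : E →L[𝕜] E) (u : ℤ →ᵇ E) (n : ℤ) :
    orbitDefect T u n = T (u n) - u (n + 1) := rfl

theorem bijective_orbitDefect_of_hyperbolic {L : X ≃L[ℂ] X} (h : Hyperbolic L) :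
    Function.Bijective (orbitDefect (L : X →L[ℂ] X)) := by
  refine ContinuousLinearMap.isUnit_iff_bijective.1 (isUnit_sub_of_disjoint_spectrum rfl ?_)
  exact Set.disjoint_left.2 fun z hz hz' =>
    h z (AlgHom.spectrum_apply_subset _ _ hz) (norm_eq_one_of_mem_spectrum_shiftUnit hz')

end OrbitDefect

section DefectConsequences

variable {E : Type*} [NormedAddCommGroup E]

theorem natCast_mul_norm_le_of_antilipschitz_orbitDefect {𝕜 : Type*} [RCLike 𝕜] [NormedSpace 𝕜 E]
    {T : E →L[𝕜] E} {K : ℝ≥0} (hT : AntilipschitzWith K (orbitDefect T)) {u : ℕ → E} {B : ℝ}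
    (hu : ∀ n, T (u n) = u (n + 1)) (hB : ∀ n, ‖u n‖ ≤ B) (N : ℕ) : N * ‖u N‖ ≤ K * B := by
  have hB0 : 0 ≤ B := (norm_nonneg _).trans (hB 0)
  have norm_nsmul (n : ℕ) (x : E) : ‖n • x‖ = n * ‖x‖ := by
    rw [RCLike.norm_nsmul 𝕜, nsmul_eq_mul]
  let ramp : ℤ →ᵇ E := .ofNormedAddCommGroupDiscrete
    (fun n => min n.toNat N • u n.toNat) (N * B) fun n => by
      rw [norm_nsmul]
      gcongr
      exacts [min_le_right _ _, hB _]
  have hramp (n : ℤ) : ramp n = min n.toNat N • u n.toNat := rfl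
  have hdefect (n : ℤ) : ‖orbitDefect T ramp n‖ ≤ B := by
    rw [orbitDefect_apply, hramp, hramp, map_nsmul, hu]
    rcases lt_or_ge n 0 with hn | hn
    · have hn0 : n.toNat = 0 := by lia
      have hn1 : (n + 1).toNat = 0 := by lia
      simpa [hn0, hn1] using hB0
    · have hn1 : (n + 1).toNat = n.toNat + 1 := by lia
      rw [hn1]
      rcases lt_or_ge n.toNat N with hN | hN
      · rw [min_eq_left hN.le, min_eq_left hN, succ_nsmul, sub_add_cancel_left, norm_neg]
        exact hB _
      · simpa [min_eq_right hN, min_eq_right (hN.trans (Nat.le_succ _))] using hB0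
  calc N * ‖u N‖ = ‖ramp N‖ := by rw [hramp, Int.toNat_natCast, min_self, norm_nsmul]
    _ ≤ ‖ramp‖ := ramp.norm_coe_le_norm N
    _ ≤ K * ‖orbitDefect T ramp‖ := hT.le_mul_norm (map_zero _) ramp
    _ ≤ K * B := by
      gcongr
      exact (BoundedContinuousFunction.norm_le hB0).2 hdefect

variable [NormedSpace ℂ E] {L : E ≃L[ℂ] E}

theorem asymptoticallyExpansive_of_antilipschitz_orbitDefect {K : ℝ≥0}
    (h : AntilipschitzWith K (orbitDefect (L : E →L[ℂ] E))) : AsymptoticallyExpansive L := by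
  refine ⟨1, one_pos, fun x hx => ?_⟩
  have hstep (n : ℕ) : L ((L ^ n) x) = (L ^ (n + 1)) x := by
    rw [pow_succ']
    rfl
  refine squeeze_zero_norm' ?_ (tendsto_const_div_atTop_nhds_zero_nat ((K : ℝ) * 1))
  filter_upwards [eventually_gt_atTop 0] with n hn
  rw [le_div_iff₀' (by positivity)]
  exact natCast_mul_norm_le_of_antilipschitz_orbitDefect h hstep hx n

theorem expansive_of_injective_orbitDefect
    (h : Function.Injective (orbitDefect (L : E →L[ℂ] E))) : Expansive L := by
  refine ⟨1, one_pos, fun x hx => ?_⟩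
  let orbit : ℤ →ᵇ E := .ofNormedAddCommGroupDiscrete (fun n => (L ^ n) x) 1 hx
  have hdefect : orbitDefect (L : E →L[ℂ] E) orbit = 0 := by
    ext n
    exact sub_eq_zero.2 (zpow_add_one_apply L n x).symm
  have horbit : orbit = 0 := h (hdefect.trans (map_zero _).symm)
  exact DFunLike.congr_fun horbit 0

theorem shadowingProperty_of_surjective_orbitDefect {L : X ≃L[ℂ] X}
    (h : Function.Surjective (orbitDefect (L : X →L[ℂ] X))) : ShadowingProperty L := by
  obtain ⟨C, hC, hpre⟩ := (orbitDefect (L : X →L[ℂ] X)).exists_preimage_norm_le h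
  refine fun ε hε => ⟨ε / C, by positivity, fun x hx => ?_⟩
  let z : ℤ →ᵇ X := .ofNormedAddCommGroupDiscrete (fun n => L (x n) - x (n + 1)) (ε / C) hx
  obtain ⟨u, huz, hu⟩ := hpre z
  have horbit (n : ℤ) : L (x n - u n) = x (n + 1) - u (n + 1) := by
    have hn : L (u n) - u (n + 1) = L (x n) - x (n + 1) := DFunLike.congr_fun huz n
    rw [map_sub, sub_eq_sub_iff_sub_eq_sub, ← hn]
  refine ⟨x 0 - u 0, fun n => ?_⟩
  rw [zpow_apply_zero_of_orbit horbit, sub_sub_cancel_left, norm_neg]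
  calc ‖u n‖ ≤ ‖u‖ := u.norm_coe_le_norm n
    _ ≤ C * ‖z‖ := hu
    _ ≤ C * (ε / C) := by
      gcongr
      exact (BoundedContinuousFunction.norm_le (by positivity)).2 hx
    _ = ε := mul_div_cancel₀ _ hC.ne'

end DefectConsequences

section UnimodularEigenvectors

variable {E : Type*} [NormedAddCommGroup E]

theorem exists_norm_zpow_apply_eq {𝕜 : Type*} [RCLike 𝕜] [NormedSpace 𝕜 E] {L : E ≃L[𝕜] E} {c : 𝕜}
    (hc : ‖c‖ = 1) {x : E} (hx : x ≠ 0) (hLx : L x = c • x) {r : ℝ} (hr : 0 ≤ r) :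
    ∃ y, ∀ n : ℤ, ‖(L ^ n) y‖ = r := by
  have hc0 : c ≠ 0 := norm_ne_zero_iff.1 (hc ▸ one_ne_zero)
  let y : E := ((r : 𝕜) * (‖x‖ : 𝕜)⁻¹) • x
  have horbit (n : ℤ) : L (c ^ n • y) = c ^ (n + 1) • y := by
    simp only [y, map_smul, hLx, zpow_add_one₀ hc0, mul_smul, smul_comm c]
  refine ⟨c ^ (0 : ℤ) • y, fun n => ?_⟩
  rw [zpow_apply_zero_of_orbit horbit, norm_smul, norm_zpow, hc, one_zpow, one_mul]
  exact norm_smul_inv_norm' hr hx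

variable [NormedSpace ℂ E] {L : E ≃L[ℂ] E} {c : ℂ} {x : E}

theorem Expansive.eq_zero_of_apply_eq_smul (h : Expansive L) (hc : ‖c‖ = 1) (hx : L x = c • x) :
    x = 0 := by
  obtain ⟨ε, hε, h⟩ := h
  by_contra hx0
  obtain ⟨y, hy⟩ := exists_norm_zpow_apply_eq hc hx0 hx hε.le
  have hy0 : y = 0 := h y fun n => (hy n).le
  exact hε.ne (by simpa [hy0] using hy 0)

theorem AsymptoticallyExpansive.eq_zero_of_apply_eq_smul (h : AsymptoticallyExpansive L)
    (hc : ‖c‖ = 1) (hx : L x = c • x) : x = 0 := by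
  obtain ⟨ε, hε, h⟩ := h
  by_contra hx0
  obtain ⟨y, hy⟩ := exists_norm_zpow_apply_eq hc hx0 hx hε.le
  have hy' (n : ℕ) : ‖(L ^ n) y‖ = ε := by simpa only [zpow_natCast] using hy n
  have hlim : Tendsto (fun _ : ℕ => ε) atTop (𝓝 0) := by
    simpa only [hy', norm_zero] using (h y fun n => (hy' n).le).norm
  exact hε.ne' (tendsto_const_nhds_iff.1 hlim)

end UnimodularEigenvectors

section ShadowingSurjective

theorem surjective_of_approx_preimage {E F : Type*} [NormedAddCommGroup E] [CompleteSpace E]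
    [NormedAddCommGroup F] {T : E →+ F} (hT : Continuous T) {C r : ℝ≥0} (hr : r < 1)
    (h : ∀ z, ∃ x, ‖x‖ ≤ C * ‖z‖ ∧ ‖z - T x‖ ≤ r * ‖z‖) : Function.Surjective T := by
  choose g hg hgT using h
  intro z
  let residual : F → F := fun w => w - T (g w)
  have hres (n : ℕ) : ‖residual^[n] z‖ ≤ r ^ n * ‖z‖ := by
    induction n with
    | zero => simp
    | succ n ih =>
      rw [Function.iterate_succ_apply', pow_succ', mul_assoc]
      exact (hgT _).trans (by gcongr)
  have hgeom : Summable fun n : ℕ => (r : ℝ) ^ n * ‖z‖ :=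
    (summable_geometric_of_lt_one r.2 hr).mul_right _
  have hsum : Summable fun n => g (residual^[n] z) :=
    (hgeom.mul_left (C : ℝ)).of_norm_bounded fun n => (hg _).trans (by gcongr; exact hres n)
  have hpartial (N : ℕ) :
      ∑ n ∈ Finset.range N, T (g (residual^[n] z)) = z - residual^[N] z := by
    simpa only [Function.iterate_succ_apply', Function.iterate_zero_apply, residual,
      sub_sub_cancel] using Finset.sum_range_sub' (fun n => residual^[n] z) N
  have hlim : Tendsto (fun N => z - residual^[N] z) atTop (𝓝 z) := by
    simpa using tendsto_const_nhds.sub (squeeze_zero_norm hres hgeom.tendsto_atTop_zero)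
  refine ⟨∑' n, g (residual^[n] z), tendsto_nhds_unique ?_ hlim⟩
  simpa only [Function.comp_apply, hpartial] using (hsum.hasSum.map T hT).tendsto_sum_nat

theorem apply_mean_sub_smul_mean {𝕜 E : Type*} [Field 𝕜] [CharZero 𝕜] [AddCommGroup E] [Module 𝕜 E]
    {T : E →ₗ[𝕜] E} {c : 𝕜} {w : E} {v : ℕ → E}
    (hv : ∀ n, T (v n) - c • v n = w + c • (v (n + 1) - v n)) {N : ℕ} (hN : N ≠ 0) :
    T ((N : 𝕜)⁻¹ • ∑ n ∈ Finset.range N, v n) - c • (N : 𝕜)⁻¹ • ∑ n ∈ Finset.range N, v n =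
      w + (N : 𝕜)⁻¹ • c • (v N - v 0) := by
  have hNw : (N : 𝕜)⁻¹ • N • w = w := by
    rw [← Nat.cast_smul_eq_nsmul 𝕜, inv_smul_smul₀ (Nat.cast_ne_zero.2 hN)]
  calc T ((N : 𝕜)⁻¹ • ∑ n ∈ Finset.range N, v n) - c • (N : 𝕜)⁻¹ • ∑ n ∈ Finset.range N, v n
      = (N : 𝕜)⁻¹ • ∑ n ∈ Finset.range N, (T (v n) - c • v n) := by
        simp only [map_smul, map_sum, Finset.sum_sub_distrib, smul_sub, smul_comm c,
          Finset.smul_sum]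
    _ = (N : 𝕜)⁻¹ • (N • w + c • (v N - v 0)) := by
        simp only [hv, Finset.sum_add_distrib, Finset.sum_const, Finset.card_range,
          ← Finset.smul_sum, Finset.sum_range_sub]
    _ = w + (N : 𝕜)⁻¹ • c • (v N - v 0) := by rw [smul_add, hNw]

theorem exists_approx_apply_sub_smul_eq {𝕜 E : Type*} [RCLike 𝕜] [NormedAddCommGroup E]
    [NormedSpace 𝕜 E] {T : E →ₗ[𝕜] E} {c : 𝕜} (hc : ‖c‖ = 1) {w : E} {y : ℕ → E} {B : ℝ}
    (hB : ∀ n, ‖y n‖ ≤ B) (hy : ∀ n, T (y n) - y (n + 1) = c ^ n • w) {η : ℝ} (hη : 0 < η) :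
    ∃ v, ‖v‖ ≤ B ∧ ‖w - (T v - c • v)‖ ≤ η := by
  have hc0 : c ≠ 0 := norm_ne_zero_iff.1 (hc ▸ one_ne_zero)
  obtain ⟨N, hN⟩ := exists_nat_gt (2 * B / η)
  have hB0 : 0 ≤ B := (norm_nonneg _).trans (hB 0)
  have hN0 : (0 : ℝ) < N := lt_of_le_of_lt (by positivity) hN
  let twist : ℕ → E := fun n => (c ^ n)⁻¹ • y n
  have norm_twist (n : ℕ) : ‖twist n‖ ≤ B := by
    simpa only [twist, norm_smul, norm_inv, norm_pow, hc, one_pow, inv_one, one_mul] using hB n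
  have hstep (n : ℕ) : T (twist n) - c • twist n = w + c • (twist (n + 1) - twist n) := by
    have htwist : c • twist (n + 1) = (c ^ n)⁻¹ • y (n + 1) := by
      rw [smul_smul, pow_succ', mul_inv, mul_inv_cancel_left₀ hc0]
    have hT : T (twist n) = w + (c ^ n)⁻¹ • y (n + 1) := by
      rw [map_smul, sub_eq_iff_eq_add.1 (hy n), smul_add, inv_smul_smul₀ (pow_ne_zero n hc0)]
    rw [hT, smul_sub, htwist, add_sub_assoc]
  have norm_mean_le {a : E} {r : ℝ} (ha : ‖a‖ ≤ N * r) : ‖(N : 𝕜)⁻¹ • a‖ ≤ r := by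
    rwa [norm_smul, norm_inv, RCLike.norm_natCast, inv_mul_le_iff₀ hN0]
  refine ⟨(N : 𝕜)⁻¹ • ∑ n ∈ Finset.range N, twist n, norm_mean_le ?_, ?_⟩
  · simpa using norm_sum_le_of_le (Finset.range N) fun n _ => norm_twist n
  · rw [apply_mean_sub_smul_mean hstep (Nat.cast_pos.1 hN0).ne', sub_add_cancel_left, norm_neg]
    apply norm_mean_le
    calc ‖c • (twist N - twist 0)‖ = ‖twist N - twist 0‖ := by rw [norm_smul, hc, one_mul]
      _ ≤ B + B := norm_sub_le_of_le (norm_twist N) (norm_twist 0)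
      _ ≤ N * η := by linarith [(div_lt_iff₀ hη).1 hN]

theorem ShadowingProperty.exists_lipschitz {E : Type*} [NormedAddCommGroup E] [NormedSpace ℂ E]
    {L : E ≃L[ℂ] E} (h : ShadowingProperty L) :
    ∃ C : ℝ≥0, ∀ δ > 0, ∀ x : ℤ → E, (∀ n, ‖L (x n) - x (n + 1)‖ ≤ δ) →
      ∃ p, ∀ n : ℤ, ‖(L ^ n) p - x n‖ ≤ C * δ := by
  obtain ⟨δ₁, hδ₁, h⟩ := h 1 one_pos
  refine ⟨⟨δ₁⁻¹, by positivity⟩, fun δ hδ x hx => ?_⟩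
  let s : ℂ := (δ₁ / δ : ℝ)
  have hs : ‖s‖ = δ₁ / δ := Complex.norm_of_nonneg (by positivity)
  have hs0 : s ≠ 0 := norm_pos_iff.1 (hs ▸ by positivity)
  obtain ⟨p, hp⟩ := h (fun n => s • x n) fun n => by
    rw [map_smul, ← smul_sub, norm_smul, hs]
    calc δ₁ / δ * ‖L (x n) - x (n + 1)‖ ≤ δ₁ / δ * δ := by gcongr; exact hx n
      _ = δ₁ := div_mul_cancel₀ _ hδ.ne'
  refine ⟨s⁻¹ • p, fun n => ?_⟩
  calc ‖(L ^ n) (s⁻¹ • p) - x n‖ = ‖s‖⁻¹ * ‖(L ^ n) p - s • x n‖ := by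
        rw [← norm_inv, ← norm_smul, smul_sub, inv_smul_smul₀ hs0, map_smul]
    _ ≤ ‖s‖⁻¹ * 1 := by gcongr; exact hp n
    _ = δ₁⁻¹ * δ := by rw [hs, mul_one, inv_div, div_eq_inv_mul]

theorem ShadowingProperty.exists_bounded_forced_orbit {E : Type*} [NormedAddCommGroup E]
    [NormedSpace ℂ E] {L : E ≃L[ℂ] E} (h : ShadowingProperty L) :
    ∃ C : ℝ≥0, ∀ δ > 0, ∀ z : ℕ → E, (∀ n, ‖z n‖ ≤ δ) →
      ∃ y : ℕ → E, (∀ n, ‖y n‖ ≤ C * δ) ∧ ∀ n, L (y n) - y (n + 1) = z n := by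
  obtain ⟨C, hC⟩ := h.exists_lipschitz
  refine ⟨C, fun δ hδ z hz => ?_⟩
  let x : ℕ → E := fun n => n.rec 0 fun k xk => L xk - z k
  have hx (n : ℕ) : L (x n) - x (n + 1) = z n := sub_sub_cancel _ _
  obtain ⟨p, hp⟩ := hC δ hδ (fun n => x n.toNat) fun n => by
    rcases lt_or_ge n 0 with hn | hn
    · have hn0 : n.toNat = 0 := by lia
      have hn1 : (n + 1).toNat = 0 := by lia
      simpa [hn0, hn1, x] using hδ.le
    · have hn1 : (n + 1).toNat = n.toNat + 1 := by lia
      rw [hn1, hx]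
      exact hz _
  refine ⟨fun n => x n - (L ^ (n : ℤ)) p, fun n => ?_, fun n => ?_⟩
  · rw [norm_sub_rev]
    exact hp n
  · simp only [Nat.cast_succ, zpow_add_one_apply, map_sub, sub_sub_sub_cancel_right, hx]

theorem ShadowingProperty.surjective_sub_algebraMap {L : X ≃L[ℂ] X} (h : ShadowingProperty L)
    {c : ℂ} (hc : ‖c‖ = 1) :
    Function.Surjective ((L : X →L[ℂ] X) - algebraMap ℂ (X →L[ℂ] X) c) := by
  obtain ⟨C, hC⟩ := h.exists_bounded_forced_orbit
  let T := (L : X →L[ℂ] X) - algebraMap ℂ (X →L[ℂ] X) c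
  refine surjective_of_approx_preimage (T := (T : X →+ X)) T.continuous
    (C := C) (r := 1 / 2) (by norm_num) fun w => ?_
  rcases eq_or_ne w 0 with rfl | hw
  · exact ⟨0, by simp⟩
  · obtain ⟨y, hyC, hy⟩ := hC ‖w‖ (norm_pos_iff.2 hw) (fun n => c ^ n • w) fun n => by
      rw [norm_smul, norm_pow, hc, one_pow, one_mul]
    exact exists_approx_apply_sub_smul_eq (T := ((L : X →L[ℂ] X) : X →ₗ[ℂ] X)) hc hyC hy
      (by positivity)

end ShadowingSurjective

theorem hyperbolic_of_shadowing_of_eigenvector_eq_zero {L : X ≃L[ℂ] X} (hs : ShadowingProperty L)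
    (heig : ∀ {c : ℂ} {x : X}, ‖c‖ = 1 → L x = c • x → x = 0) : Hyperbolic L := by
  intro c hc hnorm
  refine hc (IsUnit.sub_iff.1 (ContinuousLinearMap.isUnit_iff_bijective.2
    ⟨(injective_iff_map_eq_zero _).2 fun x hx => ?_, hs.surjective_sub_algebraMap hnorm⟩))
  exact heig hnorm (sub_eq_zero.1 hx)

theorem expansive_shadowing_iff_hyperbolic (L : X ≃L[ℂ] X) :
    ((Expansive L ∧ ShadowingProperty L) ↔ Hyperbolic L) ∧
    ((AsymptoticallyExpansive L ∧ ShadowingProperty L) ↔ Hyperbolic L) := by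
  have expansive (h : Hyperbolic L) : Expansive L :=
    expansive_of_injective_orbitDefect (bijective_orbitDefect_of_hyperbolic h).injective
  have asymptoticallyExpansive (h : Hyperbolic L) : AsymptoticallyExpansive L := by
    have hbij := bijective_orbitDefect_of_hyperbolic h
    obtain ⟨K, hK⟩ := ContinuousLinearMap.antilipschitz_of_injective_of_isClosed_range _
      hbij.injective (hbij.surjective.range_eq ▸ isClosed_univ)
    exact asymptoticallyExpansive_of_antilipschitz_orbitDefect hK
  have shadowing (h : Hyperbolic L) : ShadowingProperty L :=
    shadowingProperty_of_surjective_orbitDefect (bijective_orbitDefect_of_hyperbolic h).surjective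
  exact
    ⟨⟨fun ⟨he, hs⟩ => hyperbolic_of_shadowing_of_eigenvector_eq_zero hs he.eq_zero_of_apply_eq_smul,
      fun h => ⟨expansive h, shadowing h⟩⟩,
    ⟨fun ⟨ha, hs⟩ => hyperbolic_of_shadowing_of_eigenvector_eq_zero hs ha.eq_zero_of_apply_eq_smul,
      fun h => ⟨asymptoticallyExpansive h, shadowing h⟩⟩⟩
end

section
/- Let X be a complex Banach space and L an invertible bounded linear operator on X. If L is generalized hyperbolic, then L is strongly structurally stable: for every ε > 0 there is δ > 0 such that for every Lipschitz and bounded map β : X → X with max{sup_{x∈X}‖β(x)‖, Lip(β)} < δ, there is a homeomorphism H : X → X such that sup_{x∈X}‖H(x) − x‖ ≤ ε and H ∘ L = (L + β) ∘ H. -/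
open Filter Topology

variable {X : Type*} [NormedAddCommGroup X] [NormedSpace ℂ X] [CompleteSpace X]

/-- `L` is generalized hyperbolic. -/
def GeneralizedHyperbolic (L : X ≃L[ℂ] X) : Prop :=
  ∃ S U : Submodule ℂ X,
    IsClosed (S : Set X) ∧ IsClosed (U : Set X) ∧ IsCompl S U ∧
    (∀ x ∈ S, L x ∈ S) ∧ (∀ x ∈ U, L.symm x ∈ U) ∧
    ∃ c > (0 : ℝ), ∃ t : ℝ, 0 < t ∧ t < 1 ∧
      (∀ x ∈ S, ∀ n : ℕ, ‖(L ^ n) x‖ ≤ c * t ^ n * ‖x‖) ∧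
      (∀ x ∈ U, ∀ n : ℕ, ‖(L.symm ^ n) x‖ ≤ c * t ^ n * ‖x‖)

/-!
A Green kernel of `L` turns a bounded forcing `f` linearly into a bounded solution of
`u (n + 1) = L (u n) + f n`; for a generalized hyperbolic `L`, iterating the stable part forwards
and the unstable part backwards gives one. Let `A = L + α` and `B = L + β`. If `φ ∘ A = B ∘ φ`, the
displacement `φ - id` solves this equation along each orbit `A ^ n x`, with forcing
`β (φ (A ^ n x)) - α (A ^ n x)`. Requiring it to be the solution chosen by the Green kernel is a
fixed-point equation for `φ`, contracting when `β` has a small Lipschitz constant, so it has exactly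
one solution. Solutions from `A` to `B` and from `B` to `C` compose to the solution from `A` to `C`
because the forcings telescope along orbits, and `id` is the solution from `A` to `A`. Hence the
solutions from `A` to `B` and from `B` to `A` are inverse to each other. Stability of `L` is the
case `α = 0`.
-/

open Function
open scoped NNReal BoundedContinuousFunction

theorem eq_of_forall_norm_sub_le_mul {ι E : Type*} [NormedAddCommGroup E] {f g : ι → E} {q R : ℝ}
    (hq : q < 1) (hR : ∀ i, ‖f i - g i‖ ≤ R)
    (hstep : ∀ r, (∀ i, ‖f i - g i‖ ≤ r) → ∀ i, ‖f i - g i‖ ≤ q * r) : f = g := by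
  funext i
  have : Nonempty ι := ⟨i⟩
  have hle : ∀ j, ‖f j - g j‖ ≤ ⨆ j, ‖f j - g j‖ := le_ciSup ⟨R, Set.forall_mem_range.2 hR⟩
  have hsup : ⨆ j, ‖f j - g j‖ ≤ q * ⨆ j, ‖f j - g j‖ := ciSup_le (hstep _ hle)
  have hsup_nonpos : ⨆ j, ‖f j - g j‖ ≤ 0 := by nlinarith
  exact sub_eq_zero.1 (norm_le_zero_iff.1 ((hle i).trans hsup_nonpos))

theorem homeomorph_semiconj_zpow {Y Z : Type*} [TopologicalSpace Y] [TopologicalSpace Z]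
    {A : Y ≃ₜ Y} {B : Z ≃ₜ Z} {φ : Y → Z} (h : Semiconj φ A B) (n : ℤ) :
    Semiconj φ (A ^ n : Y ≃ₜ Y) (B ^ n : Z ≃ₜ Z) := by
  have hinv : Semiconj φ (A⁻¹ : Y ≃ₜ Y) (B⁻¹ : Z ≃ₜ Z) :=
    h.inverses_right A.right_inv B.left_inv
  induction n with
  | zero => exact Semiconj.id_right
  | succ n ih =>
    rw [zpow_add_one, zpow_add_one]
    exact ih.comp_right h
  | pred n ih =>
    rw [zpow_sub_one, zpow_sub_one]
    exact ih.comp_right hinv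

theorem summable_nnnorm_comp_of_le_geometric {𝕜 E F G : Type*} [NontriviallyNormedField 𝕜]
    [NormedAddCommGroup E] [NormedSpace 𝕜 E] [NormedAddCommGroup F] [NormedSpace 𝕜 F]
    [NormedAddCommGroup G] [NormedSpace 𝕜 G] {T : ℕ → F →L[𝕜] G} {P : E →L[𝕜] F} {c t : ℝ}
    (hc : 0 ≤ c) (ht0 : 0 ≤ t) (ht1 : t < 1) (hT : ∀ n x, ‖T n (P x)‖ ≤ c * t ^ n * ‖P x‖) :
    Summable fun n => ‖T n ∘L P‖₊ := by
  have hle (n : ℕ) : ‖T n ∘L P‖ ≤ c * ‖P‖ * t ^ n :=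
    ContinuousLinearMap.opNorm_le_bound _ (by positivity) fun x =>
      calc ‖T n (P x)‖ ≤ c * t ^ n * ‖P x‖ := hT n x
        _ ≤ c * t ^ n * (‖P‖ * ‖x‖) := by gcongr; exact P.le_opNorm x
        _ = c * ‖P‖ * t ^ n * ‖x‖ := by ring
  exact NNReal.summable_coe.1 <| .of_nonneg_of_le (fun n => norm_nonneg _) hle
    ((summable_geometric_of_lt_one ht0 ht1).mul_left _)

section GreenSum

variable {𝕜 E : Type*} [NontriviallyNormedField 𝕜] [NormedAddCommGroup E] [NormedSpace 𝕜 E]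

/-- The convolution of an operator-valued kernel `Γ` with a forcing sequence `f`, at time `0`. When
`Γ` is a Green kernel of `L` and `f` is bounded, this is the value at time `0` of a bounded solution
of `u (n + 1) = L (u n) + f n`. -/
noncomputable def greenSum (Γ : ℤ → E →L[𝕜] E) (f : ℤ → E) : E :=
  ∑' k, Γ k (f (-1 - k))

/-- A Green kernel of `L`: a summable solution of the operator recurrence
`Γ (k + 1) = L ∘ Γ k` with a unit impulse at `k + 1 = 0`. It need not be unique. -/
structure IsGreenKernel (L : E ≃L[𝕜] E) (Γ : ℤ → E →L[𝕜] E) : Prop where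
  summable : Summable fun k => ‖Γ k‖₊
  apply_add_one : ∀ k x, Γ (k + 1) x = L (Γ k x) + if k + 1 = 0 then x else 0

theorem greenSum_zero (Γ : ℤ → E →L[𝕜] E) : greenSum Γ 0 = 0 := by
  simp [greenSum]

variable {Γ : ℤ → E →L[𝕜] E} {f g : ℤ → E} {a b : ℝ}

theorem norm_greenSum_le (hΓ : Summable fun k => ‖Γ k‖₊) (hf : ∀ n, ‖f n‖ ≤ a) :
    ‖greenSum Γ f‖ ≤ (∑' k, ‖Γ k‖₊ : ℝ≥0) * a :=
  tsum_of_norm_bounded ((NNReal.hasSum_coe.2 hΓ.hasSum).mul_right a)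
    fun k => (Γ k).le_opNorm_of_le (hf _)

variable [CompleteSpace E]

theorem summable_kernel_apply (hΓ : Summable fun k => ‖Γ k‖₊) (hf : ∀ n, ‖f n‖ ≤ a) :
    Summable fun k => Γ k (f (-1 - k)) :=
  .of_norm_bounded ((NNReal.summable_coe.2 hΓ).mul_right a) fun k => (Γ k).le_opNorm_of_le (hf _)

theorem greenSum_add (hΓ : Summable fun k => ‖Γ k‖₊) (hf : ∀ n, ‖f n‖ ≤ a)
    (hg : ∀ n, ‖g n‖ ≤ b) : greenSum Γ (f + g) = greenSum Γ f + greenSum Γ g := by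
  simp only [greenSum, Pi.add_apply, map_add]
  exact (summable_kernel_apply hΓ hf).tsum_add (summable_kernel_apply hΓ hg)

theorem greenSum_sub (hΓ : Summable fun k => ‖Γ k‖₊) (hf : ∀ n, ‖f n‖ ≤ a)
    (hg : ∀ n, ‖g n‖ ≤ b) : greenSum Γ (f - g) = greenSum Γ f - greenSum Γ g := by
  simp only [greenSum, Pi.sub_apply, map_sub]
  exact (summable_kernel_apply hΓ hf).tsum_sub (summable_kernel_apply hΓ hg)

theorem continuous_greenSum {Y : Type*} [TopologicalSpace Y] {F : Y → ℤ → E}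
    (hΓ : Summable fun k => ‖Γ k‖₊) (hF : ∀ n, Continuous fun y => F y n)
    (hFa : ∀ y n, ‖F y n‖ ≤ a) : Continuous fun y => greenSum Γ (F y) :=
  continuous_tsum (fun k => (Γ k).continuous.comp (hF _))
    ((NNReal.summable_coe.2 hΓ).mul_right a) fun k y => (Γ k).le_opNorm_of_le (hFa y _)

theorem IsGreenKernel.greenSum_shift {L : E ≃L[𝕜] E} (hΓ : IsGreenKernel L Γ)
    (hf : ∀ n, ‖f n‖ ≤ a) : greenSum Γ (fun n => f (n + 1)) = L (greenSum Γ f) + f 0 := by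
  have hterm (k : ℤ) : Γ (k + 1) (f (-1 - (k + 1) + 1)) =
      L (Γ k (f (-1 - k))) + if k = -1 then f 0 else 0 := by
    rw [show -1 - (k + 1) + 1 = -1 - k by ring, hΓ.apply_add_one]
    obtain rfl | hk := eq_or_ne k (-1)
    · simp
    · rw [if_neg hk, if_neg (by lia)]
  have hsum := summable_kernel_apply hΓ.summable hf
  calc greenSum Γ (fun n => f (n + 1))
      = ∑' k, Γ (k + 1) (f (-1 - (k + 1) + 1)) := ((Equiv.addRight (1 : ℤ)).tsum_eq _).symm
    _ = ∑' k, L (Γ k (f (-1 - k))) + ∑' k : ℤ, if k = -1 then f 0 else 0 := by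
        simp only [hterm]
        exact (L.summable.2 hsum).tsum_add (hasSum_ite_eq _ _).summable
    _ = L (greenSum Γ f) + f 0 := by rw [tsum_ite_eq, greenSum, L.map_tsum]

end GreenSum

section GreenKernel

variable {𝕜 E : Type*} [NontriviallyNormedField 𝕜] [NormedAddCommGroup E] [NormedSpace 𝕜 E]

/-- The Green kernel attached to an operator `P`, meant to project onto the stable directions of
`L`: iterate the stable part forwards and the complementary part backwards. -/
noncomputable def greenKernel (L : E ≃L[𝕜] E) (P : E →L[𝕜] E) (k : ℤ) : E →L[𝕜] E :=
  if 0 ≤ k then ((L ^ k : E ≃L[𝕜] E) : E →L[𝕜] E) ∘L P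
  else -(((L ^ k : E ≃L[𝕜] E) : E →L[𝕜] E) ∘L (.id 𝕜 E - P))

theorem greenKernel_add_one_apply (L : E ≃L[𝕜] E) (P : E →L[𝕜] E) (k : ℤ) (x : E) :
    greenKernel L P (k + 1) x = L (greenKernel L P k x) + if k + 1 = 0 then x else 0 := by
  have hpow (y : E) : (L ^ (k + 1)) y = L ((L ^ k) y) := by
    rw [add_comm, zpow_one_add]
    rfl
  obtain hk | rfl | hk : 0 ≤ k ∨ k = -1 ∨ k + 1 < 0 := by lia
  · simp [greenKernel, hk, hpow, show 0 ≤ k + 1 by lia, show k + 1 ≠ 0 by lia]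
  · have hcancel (y : E) : L (L⁻¹ y) = y := L.apply_symm_apply y
    simp [greenKernel, hcancel]
  · simp [greenKernel, hpow, hk.not_ge, hk.ne, show ¬ 0 ≤ k by lia]

theorem isGreenKernel_greenKernel {L : E ≃L[𝕜] E} {P : E →L[𝕜] E}
    (hs : Summable fun n : ℕ => ‖((L ^ n : E ≃L[𝕜] E) : E →L[𝕜] E) ∘L P‖₊)
    (hu : Summable fun n : ℕ => ‖((L.symm ^ n : E ≃L[𝕜] E) : E →L[𝕜] E) ∘L (.id 𝕜 E - P)‖₊) :
    IsGreenKernel L (greenKernel L P) where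
  apply_add_one := greenKernel_add_one_apply L P
  summable := by
    refine NNReal.summable_coe.1 (.of_nat_of_neg_add_one ?_ ?_)
    · simpa [greenKernel] using NNReal.summable_coe.2 hs
    · have hpow (n : ℕ) : L ^ (-((n : ℤ) + 1)) = L.symm ^ (n + 1) := by
        rw [zpow_neg, ← Nat.cast_succ, zpow_natCast, ← inv_pow]
        rfl
      have hneg (n : ℕ) : ¬ (0 : ℤ) ≤ -((n : ℤ) + 1) := by lia
      simp only [greenKernel, if_neg (hneg _), nnnorm_neg, hpow]
      exact NNReal.summable_coe.2 ((NNReal.summable_nat_add_iff 1).2 hu)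

theorem exists_isGreenKernel_of_isTopCompl {L : E ≃L[𝕜] E} {S U : Submodule 𝕜 E} {c t : ℝ}
    (hSU : S.IsTopCompl U) (hc : 0 ≤ c) (ht0 : 0 ≤ t) (ht1 : t < 1)
    (hS : ∀ x ∈ S, ∀ n : ℕ, ‖(L ^ n) x‖ ≤ c * t ^ n * ‖x‖)
    (hU : ∀ x ∈ U, ∀ n : ℕ, ‖(L.symm ^ n) x‖ ≤ c * t ^ n * ‖x‖) :
    ∃ Γ : ℤ → E →L[𝕜] E, IsGreenKernel L Γ := by
  refine ⟨_, isGreenKernel_greenKernel (P := S.projectionL U hSU) ?_ ?_⟩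
  · exact summable_nnnorm_comp_of_le_geometric hc ht0 ht1 fun n x =>
      hS _ (Submodule.projectionL_apply_mem hSU x) n
  · rw [← Submodule.projectionL_eq_id_sub_projectionL hSU]
    exact summable_nnnorm_comp_of_le_geometric hc ht0 ht1 fun n x =>
      hU _ (Submodule.projectionL_apply_mem hSU.symm x) n

theorem GeneralizedHyperbolic.exists_isGreenKernel {L : X ≃L[ℂ] X}
    (hL : GeneralizedHyperbolic L) : ∃ Γ : ℤ → X →L[ℂ] X, IsGreenKernel L Γ := by
  obtain ⟨S, U, hS, hU, hSU, -, -, c, hc, t, ht0, ht1, hstable, hunstable⟩ := hL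
  exact exists_isGreenKernel_of_isTopCompl (Submodule.IsCompl.isTopCompl_of_isClosed hSU hS hU)
    hc.le ht0.le ht1 hstable hunstable

end GreenKernel

section GreenConj

variable {𝕜 E : Type*} [NontriviallyNormedField 𝕜] [NormedAddCommGroup E] [NormedSpace 𝕜 E]

/-- `φ` is the Green conjugacy from `A = L + α` to `B = L + β`, where `Γ` is a Green kernel of `L`.
Semiconjugacies close to the identity need not be unique, because bounded solutions of
`u (n + 1) = L (u n) + f n` need not be; this equation selects the one given by `Γ`. -/
def IsGreenConj (Γ : ℤ → E →L[𝕜] E) (A : E ≃ₜ E) (α β φ : E → E) : Prop :=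
  ∀ x, φ x = x + greenSum Γ fun n => β (φ ((A ^ n) x)) - α ((A ^ n) x)

variable {Γ : ℤ → E →L[𝕜] E} {A B : E ≃ₜ E} {α β γ φ ψ : E → E} {K : ℝ≥0} {a b c : ℝ}

theorem isGreenConj_id (Γ : ℤ → E →L[𝕜] E) (A : E ≃ₜ E) (α : E → E) :
    IsGreenConj Γ A α α id := fun x => by
  simp only [id_eq, sub_self]
  exact (add_eq_left.2 (greenSum_zero Γ)).symm

variable [CompleteSpace E]

theorem IsGreenConj.comp (hφ : IsGreenConj Γ A α β φ) (hψ : IsGreenConj Γ B β γ ψ)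
    (hφAB : Semiconj φ A B) (hΓ : Summable fun k => ‖Γ k‖₊)
    (hα : ∀ x, ‖α x‖ ≤ a) (hβ : ∀ x, ‖β x‖ ≤ b) (hγ : ∀ x, ‖γ x‖ ≤ c) :
    IsGreenConj Γ A α γ (ψ ∘ φ) := fun x => by
  have hψx := hψ (φ x)
  simp only [← (homeomorph_semiconj_zpow hφAB _).eq] at hψx
  rw [comp_apply, hψx, hφ x, add_assoc,
    ← greenSum_add hΓ (fun n => norm_sub_le_of_le (hβ _) (hα _))
      (fun n => norm_sub_le_of_le (hγ _) (hβ _))]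
  congr 2
  funext n
  simp

theorem IsGreenConj.semiconj {L : E ≃L[𝕜] E} (hφ : IsGreenConj Γ A α β φ)
    (hΓ : IsGreenKernel L Γ) (hA : ∀ x, A x = L x + α x) (hB : ∀ x, B x = L x + β x)
    (hα : ∀ x, ‖α x‖ ≤ a) (hβ : ∀ x, ‖β x‖ ≤ b) : Semiconj φ A B := fun x => by
  have hshift := hΓ.greenSum_shift (f := fun n => β (φ ((A ^ n) x)) - α ((A ^ n) x))
    fun n => norm_sub_le_of_le (hβ _) (hα _)
  simp only [zpow_add_one, Homeomorph.mul_apply, zpow_zero, Homeomorph.one_apply] at hshift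
  rw [hφ (A x), hshift, hB, hA, hφ x, map_add, ← hφ x]
  abel

theorem IsGreenConj.unique (hφ : IsGreenConj Γ A α β φ) (hψ : IsGreenConj Γ A α β ψ)
    (hΓ : Summable fun k => ‖Γ k‖₊) (hα : ∀ x, ‖α x‖ ≤ a) (hβ : ∀ x, ‖β x‖ ≤ b)
    (hβK : LipschitzWith K β) (hK : (∑' k, ‖Γ k‖₊) * K < 1) : φ = ψ := by
  have hsub (x : E) :
      φ x - ψ x = greenSum Γ fun n => β (φ ((A ^ n) x)) - β (ψ ((A ^ n) x)) := by
    rw [hφ x, hψ x, add_sub_add_left_eq_sub, ← greenSum_sub hΓ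
      (fun n => norm_sub_le_of_le (hβ _) (hα _)) (fun n => norm_sub_le_of_le (hβ _) (hα _))]
    congr 1
    funext n
    simp
  refine eq_of_forall_norm_sub_le_mul (q := ((∑' k, ‖Γ k‖₊) * K : ℝ≥0)) (mod_cast hK)
    (R := (∑' k, ‖Γ k‖₊ : ℝ≥0) * (b + b)) (fun x => ?_) fun r hr x => ?_
  · rw [hsub]
    exact norm_greenSum_le hΓ fun n => norm_sub_le_of_le (hβ _) (hβ _)
  · rw [hsub, NNReal.coe_mul, mul_assoc]
    exact norm_greenSum_le hΓ fun n => hβK.norm_sub_le_of_le (hr _)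

theorem exists_continuous_isGreenConj (A : E ≃ₜ E) (hΓ : Summable fun k => ‖Γ k‖₊)
    (hαc : Continuous α) (hα : ∀ x, ‖α x‖ ≤ a) (hβ : ∀ x, ‖β x‖ ≤ b)
    (hβK : LipschitzWith K β) (hK : (∑' k, ‖Γ k‖₊) * K < 1) :
    ∃ φ, Continuous φ ∧ IsGreenConj Γ A α β φ := by
  let forcing (h : E →ᵇ E) (x : E) (n : ℤ) : E := β ((A ^ n) x + h ((A ^ n) x)) - α ((A ^ n) x)
  have hforcing_le (h : E →ᵇ E) (x : E) (n : ℤ) : ‖forcing h x n‖ ≤ b + a :=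
    norm_sub_le_of_le (hβ _) (hα _)
  have hforcing_cont (h : E →ᵇ E) (n : ℤ) : Continuous fun x => forcing h x n :=
    (hβK.continuous.comp ((continuous_id.add h.continuous).comp (A ^ n).continuous)).sub
      (hαc.comp (A ^ n).continuous)
  let F (h : E →ᵇ E) : E →ᵇ E := .ofNormedAddCommGroup (fun x => greenSum Γ (forcing h x))
    (continuous_greenSum hΓ (hforcing_cont h) (hforcing_le h)) _
    fun x => norm_greenSum_le hΓ (hforcing_le h x)
  have hF : ContractingWith ((∑' k, ‖Γ k‖₊) * K) F := by
    refine ⟨hK, .of_dist_le_mul fun h g =>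
      (BoundedContinuousFunction.dist_le (by positivity)).2 fun x => ?_⟩
    change dist (greenSum Γ (forcing h x)) (greenSum Γ (forcing g x)) ≤ _
    rw [dist_eq_norm, ← greenSum_sub hΓ (hforcing_le h x) (hforcing_le g x), NNReal.coe_mul,
      mul_assoc]
    refine norm_greenSum_le hΓ fun n => ?_
    rw [Pi.sub_apply, sub_sub_sub_cancel_right]
    refine hβK.norm_sub_le_of_le ?_
    rw [add_sub_add_left_eq_sub, ← dist_eq_norm]
    exact BoundedContinuousFunction.dist_coe_le_dist _
  obtain ⟨h, hh⟩ : ∃ h, F h = h := ⟨_, hF.fixedPoint_isFixedPt⟩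
  exact ⟨fun x => x + h x, continuous_id.add h.continuous,
    fun x => congrArg (x + ·) (DFunLike.congr_fun hh x).symm⟩

theorem IsGreenKernel.exists_homeomorph_isGreenConj {L : E ≃L[𝕜] E} {K' : ℝ≥0}
    (hΓ : IsGreenKernel L Γ) (hA : ∀ x, A x = L x + α x) (hB : ∀ x, B x = L x + β x)
    (hα : ∀ x, ‖α x‖ ≤ a) (hβ : ∀ x, ‖β x‖ ≤ b)
    (hαK : LipschitzWith K α) (hβK : LipschitzWith K' β)
    (hK : (∑' k, ‖Γ k‖₊) * K < 1) (hK' : (∑' k, ‖Γ k‖₊) * K' < 1) :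
    ∃ H : E ≃ₜ E, IsGreenConj Γ A α β H := by
  obtain ⟨φ, hφc, hφ⟩ :=
    exists_continuous_isGreenConj A hΓ.summable hαK.continuous hα hβ hβK hK'
  obtain ⟨ψ, hψc, hψ⟩ :=
    exists_continuous_isGreenConj B hΓ.summable hβK.continuous hβ hα hαK hK
  have hψφ : ψ ∘ φ = id :=
    (hφ.comp hψ (hφ.semiconj hΓ hA hB hα hβ) hΓ.summable hα hβ hα).unique
      (isGreenConj_id Γ A α) hΓ.summable hα hα hαK hK
  have hφψ : φ ∘ ψ = id :=
    (hψ.comp hφ (hψ.semiconj hΓ hB hA hβ hα) hΓ.summable hβ hα hβ).unique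
      (isGreenConj_id Γ B β) hΓ.summable hβ hβ hβK hK'
  exact ⟨⟨⟨φ, ψ, congrFun hψφ, congrFun hφψ⟩, hφc, hψc⟩, hφ⟩

theorem exists_homeomorph_eq_add (L : E ≃L[𝕜] E) (hβK : LipschitzWith K β)
    (hK : ‖(L.symm : E →L[𝕜] E)‖₊ * K < 1) : ∃ B : E ≃ₜ E, ∀ x, B x = L x + β x := by
  have hsub : (fun x => L x + β x) - (L : E →L[𝕜] E) = β :=
    funext fun x => add_sub_cancel_left (L x) (β x)
  have happrox : ApproximatesLinearOn (fun x => L x + β x) (L : E →L[𝕜] E) Set.univ K :=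
    LipschitzOnWith.approximatesLinearOn <| by
      rw [hsub]
      exact hβK.lipschitzOnWith
  have hK_lt : Subsingleton E ∨ K < ‖(L.symm : E →L[𝕜] E)‖₊⁻¹ :=
    (subsingleton_or_nontrivial E).imp_right fun (_ : Nontrivial E) => by
      rwa [← one_div, lt_div_iff₀' L.nnnorm_symm_pos]
  exact ⟨happrox.toHomeomorph _ hK_lt, fun x => rfl⟩

theorem IsGreenKernel.exists_homeomorph_conj_add {L : E ≃L[𝕜] E} (hΓ : IsGreenKernel L Γ)
    (hβ : ∀ x, ‖β x‖ ≤ b) (hβK : LipschitzWith K β) (hK : (∑' k, ‖Γ k‖₊) * K < 1)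
    (hLK : ‖(L.symm : E →L[𝕜] E)‖₊ * K < 1) :
    ∃ H : E ≃ₜ E, (∀ x, ‖H x - x‖ ≤ (∑' k, ‖Γ k‖₊ : ℝ≥0) * b) ∧
      ∀ x, H (L x) = L (H x) + β (H x) := by
  obtain ⟨B, hB⟩ := exists_homeomorph_eq_add L hβK hLK
  have hL (x : E) : L.toHomeomorph x = L x + (0 : E → E) x := (add_zero _).symm
  have h0 (x : E) : ‖(0 : E → E) x‖ ≤ 0 := norm_zero.le
  obtain ⟨H, hH⟩ := hΓ.exists_homeomorph_isGreenConj (K := 0) hL hB h0 hβ (.const 0) hβK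
    (by simp) hK
  refine ⟨H, fun x => ?_, fun x => (hH.semiconj hΓ hL hB h0 hβ x).trans (hB _)⟩
  rw [hH x, add_sub_cancel_left]
  exact norm_greenSum_le hΓ.summable fun n =>
    (norm_sub_le_of_le (hβ _) (h0 _)).trans_eq (add_zero b)

end GreenConj

theorem generalizedHyperbolic_strongly_structurally_stable_general {𝕜 E : Type*}
    [NontriviallyNormedField 𝕜] [NormedAddCommGroup E] [NormedSpace 𝕜 E] [CompleteSpace E]
    {L : E ≃L[𝕜] E} {Γ : ℤ → E →L[𝕜] E} (hΓ : IsGreenKernel L Γ) :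
    ∀ ε > (0 : ℝ), ∃ δ > (0 : ℝ), ∀ β : E → E, ∀ K : ℝ≥0,
      LipschitzWith K β → (K : ℝ) < δ → (∃ C, C < δ ∧ ∀ x, ‖β x‖ ≤ C) →
      ∃ H : E ≃ₜ E, (∀ x, ‖H x - x‖ ≤ ε) ∧ ∀ x, H (L x) = L (H x) + β (H x) := by
  intro ε hε
  set G : ℝ≥0 := ∑' k, ‖Γ k‖₊
  set N : ℝ≥0 := ‖(L.symm : E →L[𝕜] E)‖₊
  refine ⟨min 1 ε / (1 + G + N), by positivity, ?_⟩
  rintro β K hβK hK ⟨b, hb, hβ⟩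
  have hb0 : 0 ≤ b := (norm_nonneg _).trans (hβ 0)
  rw [lt_div_iff₀ (by positivity), lt_min_iff] at hb hK
  have hGb : G * b ≤ ε := by nlinarith [mul_nonneg N.coe_nonneg hb0]
  have hKsum : K * (1 + G + N) < 1 := mod_cast hK.1
  have hGK : G * K < 1 := lt_of_le_of_lt (by rw [mul_comm]; gcongr; simp [add_right_comm]) hKsum
  have hNK : N * K < 1 := lt_of_le_of_lt (by rw [mul_comm]; gcongr; simp) hKsum
  obtain ⟨H, hH, hconj⟩ := hΓ.exists_homeomorph_conj_add hβ hβK hGK hNK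
  exact ⟨H, fun x => (hH x).trans hGb, hconj⟩

/-- A generalized hyperbolic operator is strongly structurally stable. -/
theorem generalizedHyperbolic_strongly_structurally_stable (L : X ≃L[ℂ] X)
    (hL : GeneralizedHyperbolic L) :
    ∀ ε > (0 : ℝ), ∃ δ > (0 : ℝ), ∀ β : X → X, ∀ K : NNReal,
      LipschitzWith K β → (K : ℝ) < δ → (∃ C, C < δ ∧ ∀ x, ‖β x‖ ≤ C) →
      ∃ H : X ≃ₜ X, (∀ x, ‖H x - x‖ ≤ ε) ∧ ∀ x, H (L x) = L (H x) + β (H x) := by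
  obtain ⟨Γ, hΓ⟩ := hL.exists_isGreenKernel
  exact generalizedHyperbolic_strongly_structurally_stable_general hΓ
end

section
/- Let X be a complex Banach space and L an invertible bounded linear operator on X. If L is generalized hyperbolic and the central direction E^c = {x ∈ X : sup_{n∈ℤ}‖Lⁿ(x)‖ < ∞} is a closed subspace of X, then E^c = {0}; in particular, L is expansive. -/
open Filter Topology

variable {X : Type*} [NormedAddCommGroup X] [NormedSpace ℂ X] [CompleteSpace X]

/-- The central direction of `L`. -/
def CentralDirection (L : X ≃L[ℂ] X) : Set X :=
  {x : X | ∃ M : ℝ, ∀ n : ℤ, ‖(L ^ n) x‖ ≤ M}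

/-!
On a complete central direction `E^c` the Banach-Steinhaus theorem bounds all the powers `L ^ n`
uniformly, so a point of `E^c` whose forward (or backward) orbit tends to zero vanishes: it is
recovered from any point of its orbit at a bounded cost. Write `x ∈ E^c` as `x = s + u`, where
the forward orbit of `s` and the backward orbit of `u` tend to zero. The backward orbit of `s` is
the difference of those of `x` and `u`, hence bounded, so `s ∈ E^c`; likewise `u ∈ E^c`.
Both therefore vanish.
-/

theorem banach_steinhaus_of_isComplete_submodule {ι 𝕜 E F : Type*} [NontriviallyNormedField 𝕜]
    [SeminormedAddCommGroup E] [NormedSpace 𝕜 E] [SeminormedAddCommGroup F] [NormedSpace 𝕜 F]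
    {V : Submodule 𝕜 E} (hV : IsComplete (V : Set E)) {f : ι → E →L[𝕜] F}
    (hf : ∀ x ∈ V, ∃ M : ℝ, ∀ i, ‖f i x‖ ≤ M) :
    ∃ C : ℝ, ∀ x ∈ V, ∀ i, ‖f i x‖ ≤ C * ‖x‖ := by
  have : CompleteSpace V := hV.completeSpace_coe
  obtain ⟨C, hC⟩ := banach_steinhaus (g := fun i ↦ (f i).comp V.subtypeL) fun x ↦ hf x x.2
  exact ⟨C, fun x hx i ↦ ((f i).comp V.subtypeL).le_of_opNorm_le (hC i) ⟨x, hx⟩⟩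

section Submodules

variable {𝕜 E : Type*} [NormedField 𝕜] [SeminormedAddCommGroup E] [NormedSpace 𝕜 E]

/-- The points whose forward orbit under `L` is bounded; those whose backward orbit is bounded
form `forwardBoundedSubmodule L⁻¹`. -/
def forwardBoundedSubmodule (L : E ≃L[𝕜] E) : Submodule 𝕜 E where
  carrier := {x | ∃ M : ℝ, ∀ n : ℕ, ‖(L ^ n) x‖ ≤ M}
  add_mem' := by
    rintro x y ⟨M, hM⟩ ⟨N, hN⟩
    refine ⟨M + N, fun n ↦ ?_⟩
    rw [map_add]
    exact norm_add_le_of_le (hM n) (hN n)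
  zero_mem' := ⟨0, fun n ↦ by rw [map_zero, norm_zero]⟩
  smul_mem' := by
    rintro a x ⟨M, hM⟩
    refine ⟨‖a‖ * M, fun n ↦ ?_⟩
    rw [map_smul, norm_smul]
    gcongr
    exact hM n

/-- The points whose forward orbit under `L` tends to zero; those whose backward orbit does
form `stableSubmodule L⁻¹`. -/
def stableSubmodule (L : E ≃L[𝕜] E) : Submodule 𝕜 E where
  carrier := {x | Tendsto (fun n : ℕ ↦ (L ^ n) x) atTop (𝓝 0)}
  add_mem' {x y} hx hy := by
    simpa only [Set.mem_ofPred_eq, map_add, add_zero] using Tendsto.add hx hy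
  zero_mem' := by simp only [Set.mem_ofPred_eq, map_zero, tendsto_const_nhds]
  smul_mem' a x hx := by
    simpa only [Set.mem_ofPred_eq, map_smul, smul_zero] using Tendsto.const_smul hx a

/-- The central direction of `L` as a submodule: the points with bounded forward and backward
orbits, with separate bounds so that the two halves can be treated independently. -/
def centralSubmodule (L : E ≃L[𝕜] E) : Submodule 𝕜 E :=
  forwardBoundedSubmodule L ⊓ forwardBoundedSubmodule L⁻¹

variable {L : E ≃L[𝕜] E} {x s u : E}

theorem mem_centralSubmodule_iff :
    x ∈ centralSubmodule L ↔ ∃ M : ℝ, ∀ n : ℤ, ‖(L ^ n) x‖ ≤ M := by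
  constructor
  · rintro ⟨⟨M, hM⟩, N, hN⟩
    refine ⟨max M N, fun n ↦ ?_⟩
    obtain ⟨k, rfl | rfl⟩ := n.eq_nat_or_neg
    · exact le_max_of_le_left (by simpa only [zpow_natCast] using hM k)
    · exact le_max_of_le_right (by simpa only [zpow_neg, zpow_natCast, inv_pow] using hN k)
  · rintro ⟨M, hM⟩
    refine ⟨⟨M, fun n ↦ ?_⟩, M, fun n ↦ ?_⟩
    · simpa only [zpow_natCast] using hM n
    · simpa only [zpow_neg, zpow_natCast, inv_pow] using hM (-n)

theorem centralSubmodule_inv (L : E ≃L[𝕜] E) : centralSubmodule L⁻¹ = centralSubmodule L := by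
  rw [centralSubmodule, centralSubmodule, inv_inv, inf_comm]

theorem zpow_apply_mem_centralSubmodule (hx : x ∈ centralSubmodule L) (n : ℤ) :
    (L ^ n) x ∈ centralSubmodule L := by
  obtain ⟨M, hM⟩ := mem_centralSubmodule_iff.1 hx
  refine mem_centralSubmodule_iff.2 ⟨M, fun m ↦ ?_⟩
  calc ‖(L ^ m) ((L ^ n) x)‖ = ‖(L ^ (m + n)) x‖ := by rw [zpow_add]; rfl
    _ ≤ M := hM (m + n)

theorem stableSubmodule_le_forwardBoundedSubmodule (L : E ≃L[𝕜] E) :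
    stableSubmodule L ≤ forwardBoundedSubmodule L := by
  intro x hx
  obtain ⟨M, hM⟩ := (Tendsto.norm hx).bddAbove_range
  exact ⟨M, Set.forall_mem_range.1 hM⟩

theorem le_stableSubmodule_of_norm_pow_apply_le {V : Submodule 𝕜 E} {c t : ℝ} (ht₀ : 0 ≤ t)
    (ht₁ : t < 1) (h : ∀ x ∈ V, ∀ n : ℕ, ‖(L ^ n) x‖ ≤ c * t ^ n * ‖x‖) :
    V ≤ stableSubmodule L := by
  intro x hx
  have hlim : Tendsto (fun n : ℕ ↦ c * t ^ n * ‖x‖) atTop (𝓝 0) := by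
    simpa only [mul_zero, zero_mul] using
      ((tendsto_pow_atTop_nhds_zero_of_lt_one ht₀ ht₁).const_mul c).mul_const ‖x‖
  exact squeeze_zero_norm (h x hx) hlim

theorem mem_centralSubmodule_of_add_mem (hs : s ∈ stableSubmodule L)
    (hu : u ∈ stableSubmodule L⁻¹) (h : s + u ∈ centralSubmodule L) :
    s ∈ centralSubmodule L ∧ u ∈ centralSubmodule L := by
  have hs_fwd := stableSubmodule_le_forwardBoundedSubmodule L hs
  have hu_bwd := stableSubmodule_le_forwardBoundedSubmodule L⁻¹ hu
  have hs_bwd : s ∈ forwardBoundedSubmodule L⁻¹ := (Submodule.add_mem_iff_left _ hu_bwd).1 h.2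
  have hu_fwd : u ∈ forwardBoundedSubmodule L := (Submodule.add_mem_iff_right _ hs_fwd).1 h.1
  exact ⟨⟨hs_fwd, hs_bwd⟩, hu_fwd, hu_bwd⟩

end Submodules

section Complete

variable {𝕜 E : Type*} [NontriviallyNormedField 𝕜]

theorem exists_norm_le_mul_norm_zpow_apply [SeminormedAddCommGroup E] [NormedSpace 𝕜 E]
    {L : E ≃L[𝕜] E} (hL : IsComplete (centralSubmodule L : Set E)) :
    ∃ C : ℝ, ∀ x ∈ centralSubmodule L, ∀ n : ℤ, ‖x‖ ≤ C * ‖(L ^ n) x‖ := by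
  obtain ⟨C, hC⟩ := banach_steinhaus_of_isComplete_submodule hL
    (f := fun n : ℤ ↦ ((L ^ n : E ≃L[𝕜] E) : E →L[𝕜] E)) fun x hx ↦ mem_centralSubmodule_iff.1 hx
  refine ⟨C, fun x hx n ↦ ?_⟩
  have hinv : (L ^ (-n)) ((L ^ n) x) = x := by
    rw [zpow_neg]
    exact (L ^ n).symm_apply_apply x
  calc ‖x‖ = ‖(L ^ (-n)) ((L ^ n) x)‖ := by rw [hinv]
    _ ≤ C * ‖(L ^ n) x‖ := hC _ (zpow_apply_mem_centralSubmodule hx n) (-n)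

variable [NormedAddCommGroup E] [NormedSpace 𝕜 E] {L : E ≃L[𝕜] E}

theorem disjoint_centralSubmodule_stableSubmodule
    (hL : IsComplete (centralSubmodule L : Set E)) :
    Disjoint (centralSubmodule L) (stableSubmodule L) := by
  obtain ⟨C, hC⟩ := exists_norm_le_mul_norm_zpow_apply hL
  refine Submodule.disjoint_def.2 fun x hx hx₀ ↦ norm_le_zero_iff.1 ?_
  have hlim : Tendsto (fun n : ℕ ↦ C * ‖(L ^ n) x‖) atTop (𝓝 0) := by
    simpa only [norm_zero, mul_zero] using (Tendsto.norm hx₀).const_mul C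
  exact ge_of_tendsto' hlim fun n ↦ by simpa only [zpow_natCast] using hC x hx n

theorem centralDirection_eq_zero_of_generalizedHyperbolic_general
    (hsup : Codisjoint (stableSubmodule L) (stableSubmodule L⁻¹))
    (hL : IsComplete (centralSubmodule L : Set E)) : centralSubmodule L = ⊥ := by
  refine (Submodule.eq_bot_iff _).2 fun x hx ↦ ?_
  obtain ⟨s, u, hs, hu, rfl⟩ := Submodule.codisjoint_iff_exists_add_eq.1 hsup x
  obtain ⟨hsc, huc⟩ := mem_centralSubmodule_of_add_mem hs hu hx
  rw [← centralSubmodule_inv] at huc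
  have hs₀ : s = 0 :=
    Submodule.disjoint_def.1 (disjoint_centralSubmodule_stableSubmodule hL) s hsc hs
  have hu₀ : u = 0 :=
    Submodule.disjoint_def.1
      (disjoint_centralSubmodule_stableSubmodule (by rwa [centralSubmodule_inv])) u huc hu
  rw [hs₀, hu₀, add_zero]

end Complete

section Complex

variable {E : Type*} [NormedAddCommGroup E] [NormedSpace ℂ E] {L : E ≃L[ℂ] E}

theorem GeneralizedHyperbolic.codisjoint_stableSubmodule (hL : GeneralizedHyperbolic L) :
    Codisjoint (stableSubmodule L) (stableSubmodule L⁻¹) := by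
  obtain ⟨S, U, -, -, hSU, -, -, c, -, t, ht₀, ht₁, hS, hU⟩ := hL
  exact hSU.codisjoint.mono (le_stableSubmodule_of_norm_pow_apply_le ht₀.le ht₁ hS)
    (le_stableSubmodule_of_norm_pow_apply_le ht₀.le ht₁ hU)

theorem coe_centralSubmodule (L : E ≃L[ℂ] E) :
    (centralSubmodule L : Set E) = CentralDirection L :=
  Set.ext fun _ ↦ mem_centralSubmodule_iff

theorem expansive_of_centralSubmodule_eq_bot (h : centralSubmodule L = ⊥) : Expansive L :=
  ⟨1, one_pos, fun x hx ↦ (Submodule.eq_bot_iff _).1 h x (mem_centralSubmodule_iff.2 ⟨1, hx⟩)⟩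

end Complex

theorem centralDirection_eq_zero_of_generalizedHyperbolic (L : X ≃L[ℂ] X)
    (hL : GeneralizedHyperbolic L) (hcl : IsClosed (CentralDirection L)) :
    CentralDirection L = {0} ∧ Expansive L := by
  rw [← coe_centralSubmodule] at hcl ⊢
  have hbot := centralDirection_eq_zero_of_generalizedHyperbolic_general
    hL.codisjoint_stableSubmodule hcl.isComplete
  exact ⟨by rw [hbot, Submodule.bot_coe], expansive_of_centralSubmodule_eq_bot hbot⟩
end

section
/- Let X be a complex Banach space and L a generalized hyperbolic invertible bounded linear operator on X. Then L is hyperbolic if and only if H = {0}, where H = {x ∈ X : Lⁿ(x) → 0 as n → ±∞} is the set of homoclinic points of L. -/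
open Filter Topology

variable {X : Type*} [NormedAddCommGroup X] [NormedSpace ℂ X] [CompleteSpace X]

/-- The set of homoclinic points of `L`: points whose orbit tends to `0`
both forwards and backwards. -/
def Homoclinic (L : X ≃L[ℂ] X) : Set X :=
  {x : X | Tendsto (fun n : ℤ => (L ^ n) x) atTop (𝓝 0) ∧
    Tendsto (fun n : ℤ => (L ^ n) x) atBot (𝓝 0)}

/-!
A homoclinic point `x` satisfies `(1 - Lᴺ) (x + L⁻ᴺ x) = L⁻ᴺ x - Lᴺ x`, whose right-hand side tends
to `0`. If the spectrum misses the unit circle, then `1 - z L` is bounded below uniformly in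
`‖z‖ = 1`, and averaging over the `N`-th roots of unity transfers the same lower bound to `1 - Lᴺ`,
uniformly in `N`. Hence `x + L⁻ᴺ x → 0`, that is, `x = 0`.

Conversely, let `‖z‖ = 1`. Neumann series for `L` on `S` and for `L⁻¹` on `U` show that `z - L` is
surjective. If `z - L` kills `s + u` with `s ∈ S` and `u ∈ U`, then `L s - z s = z u - L u` is
homoclinic, hence zero. So `s` and `u` satisfy the eigenvalue equation for `z` while their orbits
decay in one time direction, which forces both to vanish.
-/

section StableSubspace

variable {R E : Type*} [Semiring R] [AddCommMonoid E] [Module R E] [TopologicalSpace E]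
  [ContinuousAdd E] [ContinuousConstSMul R E]

/-- The stable subspace of `T`: the points whose forward orbit tends to `0`. For an invertible
operator `L`, the unstable subspace is `stableSubspace L.symm`. -/
def stableSubspace (T : E →L[R] E) : Submodule R E where
  carrier := {x | Tendsto (fun n : ℕ => T^[n] x) atTop (𝓝 0)}
  add_mem' hx hy := by simpa [iterate_map_add] using Tendsto.add hx hy
  zero_mem' := tendsto_const_nhds.congr fun n => (iterate_map_zero T n).symm
  smul_mem' r _ hx := by
    simpa only [← pow_apply_eq_iterate, map_smul, smul_zero, Set.mem_ofPred_eq] using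
      Tendsto.const_smul hx r

theorem mem_stableSubspace {T : E →L[R] E} {x : E} :
    x ∈ stableSubspace T ↔ Tendsto (fun n : ℕ => T^[n] x) atTop (𝓝 0) :=
  Iff.rfl

theorem apply_mem_stableSubspace_of_commute {A T : E →L[R] E} (hAT : Function.Commute A T) {x : E}
    (hx : x ∈ stableSubspace T) : A x ∈ stableSubspace T := by
  have hA : Tendsto (fun n : ℕ => A (T^[n] x)) atTop (𝓝 (A 0)) := (A.continuous.tendsto 0).comp hx
  rw [map_zero] at hA
  exact hA.congr fun n => hAT.iterate_right n x

end StableSubspace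

theorem exists_sub_apply_eq_of_summable_iterate {R E : Type*} [Semiring R] [AddCommGroup E]
    [Module R E] [TopologicalSpace E] [IsTopologicalAddGroup E] [T2Space E] {T : E →L[R] E} {y : E}
    (hy : Summable fun n : ℕ => T^[n] y) : ∃ x, x - T x = y := by
  refine ⟨∑' n : ℕ, T^[n] y, ?_⟩
  have hT : T (∑' n : ℕ, T^[n] y) = ∑' n : ℕ, T^[n + 1] y := by
    simp only [T.map_tsum hy, Function.iterate_succ_apply']
  rw [hT, hy.tsum_eq_zero_add, Function.iterate_zero_apply, add_sub_cancel_right]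

theorem coe_pow_eq_iterate {R E : Type*} [Semiring R] [AddCommMonoid E] [Module R E]
    [TopologicalSpace E] (L : E ≃L[R] E) (n : ℕ) : ⇑(L ^ n) = L^[n] :=
  hom_coe_pow (fun A : E ≃L[R] E => ⇑A) rfl (fun _ _ => rfl) L n

section Eigenvalues

variable {𝕜 E : Type*} [NormedField 𝕜] [NormedAddCommGroup E] [NormedSpace 𝕜 E]
  {T : E →L[𝕜] E} {z : 𝕜}

theorem eq_zero_of_mem_stableSubspace_of_apply_eq_smul (hz : 1 ≤ ‖z‖) {x : E}
    (hx : x ∈ stableSubspace T) (hTx : T x = z • x) : x = 0 := by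
  have hiter (n : ℕ) : T^[n] x = z ^ n • x := by
    induction n with
    | zero => simp
    | succ n ih => rw [Function.iterate_succ_apply', ih, map_smul, hTx, smul_smul, pow_succ]
  have hle (n : ℕ) : ‖x‖ ≤ ‖T^[n] x‖ := by
    rw [hiter, norm_smul, norm_pow]
    exact le_mul_of_one_le_left (norm_nonneg x) (one_le_pow₀ hz)
  have hlim : Tendsto (fun n : ℕ => ‖T^[n] x‖) atTop (𝓝 0) := by
    simpa using (mem_stableSubspace.1 hx).norm
  exact norm_le_zero_iff.1 (ge_of_tendsto' hlim hle)

theorem exists_smul_sub_apply_eq_of_summable_norm_iterate [CompleteSpace E] (hz : 1 ≤ ‖z‖)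
    {y : E} (hy : Summable fun n : ℕ => ‖T^[n] y‖) : ∃ x, z • x - T x = y := by
  have hz0 : z ≠ 0 := norm_pos_iff.1 (one_pos.trans_le hz)
  have hsum : Summable fun n : ℕ => (z⁻¹ • T)^[n] y := by
    refine hy.of_norm_bounded fun n => ?_
    rw [← pow_apply_eq_iterate, smul_pow, smul_apply, pow_apply_eq_iterate, norm_smul, norm_pow,
      norm_inv]
    exact mul_le_of_le_one_left (norm_nonneg _)
      (pow_le_one₀ (inv_nonneg.2 (norm_nonneg z)) (inv_le_one_of_one_le₀ hz))
  obtain ⟨x, hx⟩ := exists_sub_apply_eq_of_summable_iterate hsum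
  exact ⟨z⁻¹ • x, by simpa [hz0] using hx⟩

end Eigenvalues

theorem exists_norm_le_mul_norm_smul_sub_apply {𝕜 E : Type*} [NontriviallyNormedField 𝕜]
    [NormedAddCommGroup E] [NormedSpace 𝕜 E] [CompleteSpace E] {T : E →L[𝕜] E} {K : Set 𝕜}
    (hK : IsCompact K) (hKT : K ⊆ resolventSet 𝕜 T) :
    ∃ M : ℝ, ∀ z ∈ K, ∀ y, ‖y‖ ≤ M * ‖z • y - T y‖ := by
  have hcont : ContinuousOn (resolvent T) K := HasDerivAt.continuousOn fun z hz =>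
    spectrum.hasDerivAt_resolvent_const_left (hKT hz)
  obtain ⟨M, hM⟩ := hK.exists_bound_of_continuousOn hcont
  refine ⟨M, fun z hz y => ?_⟩
  have hy : resolvent T z (z • y - T y) = y := by
    have hinv := Ring.inverse_mul_cancel _ (spectrum.mem_resolventSet_iff.1 (hKT hz))
    simpa [resolvent, Algebra.algebraMap_eq_smul_one] using
      congrArg (fun A : E →L[𝕜] E => A y) hinv
  calc
    ‖y‖ = ‖resolvent T z (z • y - T y)‖ := by rw [hy]
    _ ≤ M * ‖z • y - T y‖ := (resolvent T z).le_of_opNorm_le (hM z hz) _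

section RootsOfUnity

variable {R : Type*} [CommRing R] [IsDomain R] {ζ : R} {N : ℕ}

theorem geom_sum_pow_eq_zero_of_isPrimitiveRoot (hζ : IsPrimitiveRoot ζ N) {k : ℕ} (hk : k ≠ 0)
    (hkN : k < N) : ∑ j ∈ Finset.range N, (ζ ^ k) ^ j = 0 := by
  have hne : ζ ^ k - 1 ≠ 0 := sub_ne_zero.2 (hζ.pow_ne_one_of_pos_of_lt hk hkN)
  refine (mul_eq_zero.1 ?_).resolve_left hne
  rw [mul_geom_sum, pow_right_comm, hζ.pow_eq_one, one_pow, sub_self]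

theorem sum_sum_pow_smul_of_isPrimitiveRoot (hζ : IsPrimitiveRoot ζ N) {M : Type*}
    [AddCommGroup M] [Module R M] (f : ℕ → M) :
    ∑ j ∈ Finset.range N, ∑ k ∈ Finset.range N, (ζ ^ j) ^ k • f k = (N : R) • f 0 := by
  rcases N.eq_zero_or_pos with rfl | hN
  · simp
  rw [Finset.sum_comm]
  simp only [← Finset.sum_smul, pow_right_comm ζ]
  rw [Finset.sum_eq_single_of_mem 0 (Finset.mem_range.2 hN)]
  · simp
  · intro k hkN hk
    rw [geom_sum_pow_eq_zero_of_isPrimitiveRoot hζ hk (Finset.mem_range.1 hkN), zero_smul]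

end RootsOfUnity

section Homoclinic

variable {E : Type*} [NormedAddCommGroup E] [NormedSpace ℂ E]

theorem norm_le_mul_norm_sub_iterate {T : E →L[ℂ] E} {M : ℝ}
    (hM : ∀ z : ℂ, ‖z‖ = 1 → ∀ y, ‖y‖ ≤ M * ‖y - z • T y‖) {N : ℕ} (hN : N ≠ 0) (y : E) :
    ‖y‖ ≤ M * ‖y - T^[N] y‖ := by
  set ζ : ℂ := Complex.exp (2 * Real.pi * Complex.I / N)
  have hζ : IsPrimitiveRoot ζ N := Complex.isPrimitiveRoot_exp N hN
  let w (j : ℕ) : E := ∑ k ∈ Finset.range N, (ζ ^ j) ^ k • T^[k] y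
  have hw (j : ℕ) : w j - ζ ^ j • T (w j) = y - T^[N] y := by
    have htel := Finset.sum_range_sub' (fun k => (ζ ^ j) ^ k • T^[k] y) N
    rw [Finset.sum_sub_distrib, pow_right_comm ζ j N, hζ.pow_eq_one, one_pow, one_smul] at htel
    simpa [w, Finset.smul_sum, smul_smul, pow_succ', Function.iterate_succ_apply'] using htel
  have hw_norm (j : ℕ) : ‖w j‖ ≤ M * ‖y - T^[N] y‖ := by
    rw [← hw j]
    exact hM (ζ ^ j) (by rw [norm_pow, hζ.norm'_eq_one hN, one_pow]) (w j)
  have hN_pos : (0 : ℝ) < N := Nat.cast_pos.2 (Nat.pos_of_ne_zero hN)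
  refine le_of_mul_le_mul_left ?_ hN_pos
  calc
    (N : ℝ) * ‖y‖ = ‖∑ j ∈ Finset.range N, w j‖ := by
      rw [sum_sum_pow_smul_of_isPrimitiveRoot hζ fun k => T^[k] y]
      simp [norm_smul]
    _ ≤ ∑ _j ∈ Finset.range N, M * ‖y - T^[N] y‖ := norm_sum_le_of_le _ fun j _ => hw_norm j
    _ = N * (M * ‖y - T^[N] y‖) := by simp

theorem mem_homoclinic_iff {L : E ≃L[ℂ] E} {x : E} :
    x ∈ Homoclinic L ↔
      x ∈ stableSubspace (L : E →L[ℂ] E) ∧ x ∈ stableSubspace (L.symm : E →L[ℂ] E) := by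
  have hneg (n : ℕ) : L ^ (-(n : ℤ)) = L.symm ^ n := by
    rw [zpow_neg, zpow_natCast, ← inv_pow]
    rfl
  refine and_congr ?_ ?_
  · rw [← Nat.map_cast_int_atTop, tendsto_map'_iff]
    simp only [Function.comp_def, zpow_natCast, coe_pow_eq_iterate]
    rfl
  · rw [← map_neg_atTop, ← Nat.map_cast_int_atTop, tendsto_map'_iff, tendsto_map'_iff]
    simp only [Function.comp_def, hneg, coe_pow_eq_iterate]
    rfl

theorem eq_zero_of_mem_homoclinic {L : E ≃L[ℂ] E} {M : ℝ}
    (hM : ∀ z : ℂ, ‖z‖ = 1 → ∀ y, ‖y‖ ≤ M * ‖y - z • L y‖) {x : E} (hx : x ∈ Homoclinic L) :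
    x = 0 := by
  obtain ⟨hfwd, hbwd⟩ := mem_homoclinic_iff.1 hx
  rw [mem_stableSubspace, ContinuousLinearEquiv.coe_coe] at hfwd hbwd
  have hbound (N : ℕ) (hN : N ≠ 0) : ‖x + L.symm^[N] x‖ ≤ M * ‖L.symm^[N] x - L^[N] x‖ := by
    have hdiff : (x + L.symm^[N] x) - L^[N] (x + L.symm^[N] x) = L.symm^[N] x - L^[N] x := by
      rw [iterate_map_add, Function.LeftInverse.iterate L.apply_symm_apply N x]
      abel
    rw [← hdiff]
    exact norm_le_mul_norm_sub_iterate (T := (L : E →L[ℂ] E)) hM hN _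
  have hleft : Tendsto (fun n => ‖x + L.symm^[n] x‖) atTop (𝓝 ‖x‖) := by
    simpa using (hbwd.const_add x).norm
  have hright : Tendsto (fun n => M * ‖L.symm^[n] x - L^[n] x‖) atTop (𝓝 0) := by
    simpa using (hbwd.sub hfwd).norm.const_mul M
  refine norm_le_zero_iff.1 (le_of_tendsto_of_tendsto hleft hright ?_)
  filter_upwards [eventually_ne_atTop 0] with N hN using hbound N hN

theorem eq_zero_of_apply_eq_smul_of_homoclinic_eq_singleton_zero {L : E ≃L[ℂ] E}
    (hH : Homoclinic L = {0}) {z : ℂ} (hz : ‖z‖ = 1) {s u : E}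
    (hs : s ∈ stableSubspace (L : E →L[ℂ] E))
    (hu : u ∈ stableSubspace (L.symm : E →L[ℂ] E)) (h : L (s + u) = z • (s + u)) :
    s + u = 0 := by
  have hz0 : z ≠ 0 := norm_ne_zero_iff.1 (hz ▸ one_ne_zero)
  have hcomm : Function.Commute (L : E →L[ℂ] E) (L.symm : E →L[ℂ] E) := fun x => by simp
  have hsu : L s - z • s = z • u - L u := by
    rw [map_add, smul_add] at h
    rw [sub_eq_sub_iff_add_eq_add, h, add_comm]
  have hsu_mem : L s - z • s ∈ Homoclinic L := by
    refine mem_homoclinic_iff.2 ⟨?_, ?_⟩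
    · exact sub_mem (apply_mem_stableSubspace_of_commute (Function.Commute.refl _) hs)
        (Submodule.smul_mem _ z hs)
    · rw [hsu]
      exact sub_mem (Submodule.smul_mem _ z hu) (apply_mem_stableSubspace_of_commute hcomm hu)
  have hsu_zero : L s - z • s = 0 := by simpa [hH] using hsu_mem
  have hLs : L s = z • s := sub_eq_zero.1 hsu_zero
  have hLu : L.symm u = z⁻¹ • u := by
    have : z • u = L u := sub_eq_zero.1 (hsu ▸ hsu_zero)
    rw [L.symm_apply_eq, map_smul, ← this, inv_smul_smul₀ hz0]
  rw [eq_zero_of_mem_stableSubspace_of_apply_eq_smul hz.ge hs hLs,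
    eq_zero_of_mem_stableSubspace_of_apply_eq_smul (by simp [hz]) hu hLu, add_zero]

theorem GeneralizedHyperbolic.exists_add_eq {L : E ≃L[ℂ] E} (hL : GeneralizedHyperbolic L)
    (x : E) :
    ∃ s u : E, s + u = x ∧ (Summable fun n : ℕ => ‖L^[n] s‖) ∧
      Summable fun n : ℕ => ‖L.symm^[n] u‖ := by
  obtain ⟨S, U, -, -, hSU, -, -, c, -, t, ht0, ht1, hS, hU⟩ := hL
  have hgeom (y : E) : Summable fun n : ℕ => c * t ^ n * ‖y‖ :=
    ((summable_geometric_of_lt_one ht0.le ht1).mul_left c).mul_right ‖y‖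
  obtain ⟨s, hs, u, hu, rfl⟩ := Submodule.mem_sup.1 (hSU.sup_eq_top ▸ Submodule.mem_top (x := x))
  simp only [coe_pow_eq_iterate] at hS hU
  exact ⟨s, u, rfl, (hgeom s).of_nonneg_of_le (fun _ => norm_nonneg _) (hS s hs),
    (hgeom u).of_nonneg_of_le (fun _ => norm_nonneg _) (hU u hu)⟩

end Homoclinic

theorem Hyperbolic.homoclinic_eq_singleton_zero {L : X ≃L[ℂ] X} (hL : Hyperbolic L) :
    Homoclinic L = {0} := by
  have hcircle : Metric.sphere (0 : ℂ) 1 ⊆ resolventSet ℂ (L : X →L[ℂ] X) := fun z hz =>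
    not_not.1 fun hmem => hL z hmem (by simpa using hz)
  obtain ⟨M, hM⟩ := exists_norm_le_mul_norm_smul_sub_apply (isCompact_sphere 0 1) hcircle
  have hM' (z : ℂ) (hz : ‖z‖ = 1) (y : X) : ‖y‖ ≤ M * ‖y - z • L y‖ := by
    have hz0 : z ≠ 0 := norm_ne_zero_iff.1 (hz ▸ one_ne_zero)
    have heq : y - z • L y = z • (z⁻¹ • y - L y) := by rw [smul_sub, smul_inv_smul₀ hz0]
    rw [heq, norm_smul, hz, one_mul]
    exact hM z⁻¹ (by simp [hz]) y
  refine Set.eq_singleton_iff_unique_mem.2 ⟨?_, fun x hx => eq_zero_of_mem_homoclinic hM' hx⟩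
  exact mem_homoclinic_iff.2 ⟨zero_mem _, zero_mem _⟩

theorem GeneralizedHyperbolic.exists_smul_sub_apply_eq {L : X ≃L[ℂ] X}
    (hL : GeneralizedHyperbolic L) {z : ℂ} (hz : ‖z‖ = 1) (y : X) : ∃ x, z • x - L x = y := by
  have hz0 : z ≠ 0 := norm_ne_zero_iff.1 (hz ▸ one_ne_zero)
  obtain ⟨s, u, rfl, hs, hu⟩ := hL.exists_add_eq y
  obtain ⟨a, ha⟩ := exists_smul_sub_apply_eq_of_summable_norm_iterate
    (T := (L : X →L[ℂ] X)) hz.ge hs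
  obtain ⟨b, hb⟩ := exists_smul_sub_apply_eq_of_summable_norm_iterate
    (T := (L.symm : X →L[ℂ] X)) (z := z⁻¹) (by simp [hz]) hu
  -- `z⁻¹ - L⁻¹ = -(z - L) (z⁻¹ L⁻¹)`
  refine ⟨a - z⁻¹ • L.symm b, ?_⟩
  rw [← ha, ← hb]
  simp only [smul_sub, map_sub, map_smul, smul_inv_smul₀ hz0, L.apply_symm_apply,
    ContinuousLinearEquiv.coe_coe]
  abel

theorem GeneralizedHyperbolic.hyperbolic_of_homoclinic_eq_singleton_zero {L : X ≃L[ℂ] X}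
    (hL : GeneralizedHyperbolic L) (hH : Homoclinic L = {0}) : Hyperbolic L := by
  intro z hmem hz
  refine hmem (ContinuousLinearMap.isUnit_iff_bijective.2 ⟨?_, fun y => ?_⟩)
  · refine (injective_iff_map_eq_zero _).2 fun x hx => ?_
    obtain ⟨s, u, rfl, hs, hu⟩ := hL.exists_add_eq x
    have heig : L (s + u) = z • (s + u) := by
      rw [sub_apply, ContinuousLinearMap.algebraMap_apply, sub_eq_zero] at hx
      exact hx.symm
    exact eq_zero_of_apply_eq_smul_of_homoclinic_eq_singleton_zero hH hz
      (tendsto_zero_iff_norm_tendsto_zero.2 hs.tendsto_atTop_zero)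
      (tendsto_zero_iff_norm_tendsto_zero.2 hu.tendsto_atTop_zero) heig
  · simpa [Algebra.algebraMap_eq_smul_one] using hL.exists_smul_sub_apply_eq hz y

theorem hyperbolic_iff_homoclinic_trivial (L : X ≃L[ℂ] X)
    (hL : GeneralizedHyperbolic L) :
    Hyperbolic L ↔ Homoclinic L = {0} :=
  ⟨Hyperbolic.homoclinic_eq_singleton_zero, hL.hyperbolic_of_homoclinic_eq_singleton_zero⟩
end

section
/- Let X be a complex Banach space and L a generalized hyperbolic invertible bounded linear operator on X with associated splitting X = S ⊕ U. Then L is hyperbolic if and only if L(U) ∩ S = {0}. -/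
/-!
Call `x` homoclinic if its two-sided orbit `(Lⁿ x)_{n ∈ ℤ}` is summable. If `x ≠ 0` is homoclinic,
the vector-valued Fourier series `F w = ∑ wⁿ • Lⁿ x` satisfies `L (F w) = w⁻¹ • F w` on the unit
circle and has `x` as its zeroth coefficient, so some `F w` is an eigenvector of `L` with eigenvalue
of modulus one. Nonzero vectors of `L(U) ∩ S` are homoclinic; hence there are none if `L` is
hyperbolic.

Conversely, for `‖z‖ = 1` Neumann series along `S` and `U` show that `z - L` is always surjective.
If `L x = z • x` and `x = s + u`, then `L (u - z • L⁻¹ u) = z • s - L s` is in `L(U) ∩ S`. If this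
intersection is trivial, `s` and `u` are eigenvectors whose orbits are summable but of constant
norm, so `x = 0` and `z - L` is bijective.
-/

open Filter Topology

variable {X : Type*} [NormedAddCommGroup X] [NormedSpace ℂ X] [CompleteSpace X]

section FourierSeries

open MeasureTheory AddCircle

variable {E : Type*} [NormedAddCommGroup E] [NormedSpace ℂ E] [CompleteSpace E] {a : ℤ → E}

theorem fourierCoeff_fourier_smul {T : ℝ} [Fact (0 < T)] (n : ℤ) (v : E) :
    fourierCoeff (fun θ : AddCircle T ↦ fourier n θ • v) = Pi.single n v := by
  ext k
  have h := congrFun (fourierCoeff_fourier (T := T) n) k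
  simp only [fourierCoeff, smul_eq_mul] at h
  simp only [fourierCoeff, ← mul_smul, integral_smul_const, h]
  obtain rfl | hkn := eq_or_ne k n
  · simp
  · simp [hkn]

theorem fourierCoeff_tsum_fourier_smul {T : ℝ} [Fact (0 < T)] (ha : Summable fun n ↦ ‖a n‖) :
    fourierCoeff (fun θ : AddCircle T ↦ ∑' n, fourier n θ • a n) = a := by
  ext k
  have norm_term (n : ℤ) (θ : AddCircle T) : ‖fourier (-k) θ • fourier n θ • a n‖ = ‖a n‖ := by
    simp only [norm_smul, fourier_apply, Circle.norm_coe, one_mul]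
  have integrable_term (n : ℤ) :
      Integrable (fun θ : AddCircle T ↦ fourier (-k) θ • fourier n θ • a n) haarAddCircle :=
    Continuous.integrable_of_hasCompactSupport (by fun_prop) (.of_compactSpace _)
  calc fourierCoeff (fun θ : AddCircle T ↦ ∑' n, fourier n θ • a n) k
      = ∫ θ : AddCircle T, ∑' n, fourier (-k) θ • fourier n θ • a n ∂haarAddCircle := by
        simp only [fourierCoeff, tsum_const_smul'']
    _ = ∑' n, fourierCoeff (fun θ : AddCircle T ↦ fourier n θ • a n) k :=
        (integral_tsum_of_summable_integral_norm integrable_term (by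
          simpa only [norm_term, integral_const, probReal_univ, one_smul] using ha)).symm
    _ = a k := by
        simp only [fourierCoeff_fourier_smul, Pi.single_apply, eq_comm (a := k), tsum_ite_eq]

theorem exists_norm_eq_one_tsum_zpow_smul_ne_zero (ha : Summable fun n ↦ ‖a n‖) (ha0 : a ≠ 0) :
    ∃ w : ℂ, ‖w‖ = 1 ∧ ∑' n : ℤ, w ^ n • a n ≠ 0 := by
  contrapose! ha0
  have hseries (θ : UnitAddCircle) : ∑' n : ℤ, fourier n θ • a n = 0 := by
    simpa [fourier_apply, toCircle_zsmul] using ha0 (toCircle θ) (Circle.norm_coe _)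
  rw [← fourierCoeff_tsum_fourier_smul (T := 1) ha]
  simp only [hseries]
  ext k
  simp [fourierCoeff]

end FourierSeries

section Iterates

variable {R M : Type*} [Semiring R] [AddCommMonoid M] [TopologicalSpace M] [Module R M]

theorem coe_pow_eq_iterate_s8 (L : M ≃L[R] M) (n : ℕ) : ⇑(L ^ n) = L^[n] :=
  hom_coe_pow _ rfl (fun _ _ ↦ rfl) L n

theorem zpow_neg_succ_apply_apply (L : M ≃L[R] M) (n : ℕ) (x : M) :
    (L ^ (-(n + 1) : ℤ)) (L x) = L.symm^[n] x := by
  have h : L ^ (-(n + 1) : ℤ) * L = L⁻¹ ^ n := by group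
  rw [← coe_pow_eq_iterate_s8]
  exact DFunLike.congr_fun h x

end Iterates

section OrbitSeries

variable {𝕜 E : Type*} [DivisionRing 𝕜] [AddCommGroup E] [TopologicalSpace E] [T2Space E]
  [Module 𝕜 E] [ContinuousConstSMul 𝕜 E]

theorem map_tsum_zpow_smul_zpow_apply (L : E ≃L[𝕜] E) {w : 𝕜} (hw : w ≠ 0) (x : E) :
    L (∑' n : ℤ, w ^ n • (L ^ n) x) = w⁻¹ • ∑' n : ℤ, w ^ n • (L ^ n) x := by
  have hterm (n : ℤ) : L (w ^ n • (L ^ n) x) = w⁻¹ • w ^ (n + 1) • (L ^ (n + 1)) x := by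
    rw [map_smul, add_comm n 1, zpow_one_add₀ hw, zpow_one_add, smul_smul, inv_mul_cancel_left₀ hw]
    rfl
  rw [L.map_tsum, tsum_congr hterm, tsum_const_smul'']
  exact congrArg _ ((Equiv.addRight 1).tsum_eq fun n : ℤ ↦ w ^ n • (L ^ n) x)

theorem smul_tsum_sub_map_tsum [IsTopologicalAddGroup E] (A : E →L[𝕜] E) {z : 𝕜} (hz : z ≠ 0)
    {y : E} (hs : Summable fun n : ℕ ↦ z⁻¹ ^ (n + 1) • A^[n] y) :
    z • (∑' n : ℕ, z⁻¹ ^ (n + 1) • A^[n] y) - A (∑' n : ℕ, z⁻¹ ^ (n + 1) • A^[n] y) = y := by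
  have hz_term (n : ℕ) : z • z⁻¹ ^ (n + 1) • A^[n] y = z⁻¹ ^ n • A^[n] y := by
    rw [smul_smul, pow_succ', mul_inv_cancel_left₀ hz]
  have hA_term (n : ℕ) : A (z⁻¹ ^ (n + 1) • A^[n] y) = z⁻¹ ^ (n + 1) • A^[n + 1] y := by
    rw [map_smul, Function.iterate_succ_apply']
  have hs' : Summable fun n : ℕ ↦ z⁻¹ ^ n • A^[n] y := by
    simpa only [hz_term] using hs.const_smul z
  rw [← tsum_const_smul'', A.map_tsum hs, tsum_congr hz_term, tsum_congr hA_term,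
    hs'.tsum_eq_zero_add, pow_zero, one_smul, Function.iterate_zero_apply, add_sub_cancel_right]

end OrbitSeries

section NormedSpace

variable {𝕜 E : Type*} [NormedField 𝕜] [NormedAddCommGroup E] [NormedSpace 𝕜 E]

theorem exists_smul_sub_map_eq_of_summable_iterate [CompleteSpace E] (A : E →L[𝕜] E) {z : 𝕜}
    (hz : ‖z‖ = 1) {y : E} (hy : Summable fun n : ℕ ↦ ‖A^[n] y‖) : ∃ x, z • x - A x = y := by
  have hz0 : z ≠ 0 := norm_ne_zero_iff.1 (by simp [hz])
  refine ⟨_, smul_tsum_sub_map_tsum A hz0 (.of_norm ?_)⟩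
  simpa [norm_smul, hz] using hy

theorem exists_smul_sub_map_eq_of_summable_iterate_symm [CompleteSpace E] (L : E ≃L[𝕜] E) {z : 𝕜}
    (hz : ‖z‖ = 1) {y : E} (hy : Summable fun n : ℕ ↦ ‖L.symm^[n] y‖) :
    ∃ x, z • x - L x = y := by
  have hz0 : z ≠ 0 := norm_ne_zero_iff.1 (by simp [hz])
  obtain ⟨x, hx⟩ := exists_smul_sub_map_eq_of_summable_iterate (L.symm : E →L[𝕜] E)
    (z := z⁻¹) (by simp [hz]) hy
  refine ⟨-z⁻¹ • L.symm x, ?_⟩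
  simpa [smul_smul, hz0, sub_eq_add_neg, add_comm] using hx

theorem eq_zero_of_map_eq_smul_of_summable_iterate {F : Type*} [FunLike F E E]
    [LinearMapClass F 𝕜 E E] (A : F) {z : 𝕜} (hz : ‖z‖ = 1) {v : E} (hv : A v = z • v)
    (hs : Summable fun n : ℕ ↦ ‖A^[n] v‖) : v = 0 := by
  have hiter (n : ℕ) : A^[n] v = z ^ n • v := by
    induction n with
    | zero => simp
    | succ n ih => rw [Function.iterate_succ_apply', ih, map_smul, hv, smul_smul, pow_succ]
  simpa [hiter, norm_smul, hz, summable_const_iff] using hs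

theorem summable_norm_iterate_of_le_geometric (L : E ≃L[𝕜] E) {x : E} {C t : ℝ} (ht0 : 0 ≤ t)
    (ht1 : t < 1) (hx : ∀ n : ℕ, ‖(L ^ n) x‖ ≤ C * t ^ n) : Summable fun n : ℕ ↦ ‖L^[n] x‖ := by
  simp only [coe_pow_eq_iterate_s8] at hx
  exact .of_nonneg_of_le (fun _ ↦ norm_nonneg _) hx
    ((summable_geometric_of_lt_one ht0 ht1).mul_left C)

end NormedSpace

section Hyperbolic

variable (L : X ≃L[ℂ] X)

theorem hyperbolic_iff_forall_bijective :
    Hyperbolic L ↔ ∀ z : ℂ, ‖z‖ = 1 → Function.Bijective fun x ↦ z • x - L x := by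
  refine forall_congr' fun z ↦ ?_
  rw [imp_not_comm, spectrum.notMem_iff, ContinuousLinearMap.isUnit_iff_bijective]
  rfl

variable {L}

theorem exists_eigenvector_norm_eq_one_of_summable_orbit {x : X} (hx : x ≠ 0)
    (hs : Summable fun n : ℤ ↦ ‖(L ^ n) x‖) : ∃ z : ℂ, ‖z‖ = 1 ∧ ∃ v ≠ 0, L v = z • v := by
  obtain ⟨w, hw, hsum⟩ := exists_norm_eq_one_tsum_zpow_smul_ne_zero hs
    fun h ↦ hx (by simpa using congrFun h 0)
  have hw0 : w ≠ 0 := norm_ne_zero_iff.1 (by simp [hw])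
  exact ⟨w⁻¹, by simp [hw], _, hsum, map_tsum_zpow_smul_zpow_apply L hw0 x⟩

theorem Hyperbolic.eq_zero_of_summable_orbit (hL : Hyperbolic L) {x : X}
    (hs : Summable fun n : ℤ ↦ ‖(L ^ n) x‖) : x = 0 := by
  by_contra hx
  obtain ⟨z, hz, v, hv, hLv⟩ := exists_eigenvector_norm_eq_one_of_summable_orbit hx hs
  refine hv (((hyperbolic_iff_forall_bijective L).1 hL z hz).injective ?_)
  simp [hLv]

theorem Hyperbolic.map_eq_zero_of_summable_iterate (hL : Hyperbolic L) {u : X}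
    (hfwd : Summable fun n : ℕ ↦ ‖L^[n] (L u)‖) (hbwd : Summable fun n : ℕ ↦ ‖L.symm^[n] u‖) :
    L u = 0 := by
  refine hL.eq_zero_of_summable_orbit (.of_nat_of_neg_add_one ?_ ?_)
  · simpa only [zpow_natCast, coe_pow_eq_iterate_s8] using hfwd
  · simpa only [zpow_neg_succ_apply_apply] using hbwd

end Hyperbolic

section Splitting

theorem map_eq_smul_of_map_add_eq_smul {R M : Type*} [Ring R] [AddCommGroup M] [Module R M]
    {L : M ≃ₗ[R] M} {S U : Submodule R M} (hLS : ∀ x ∈ S, L x ∈ S) (hLU : ∀ x ∈ U, L.symm x ∈ U)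
    (hSU : L '' U ∩ S = {0}) {z : R} {s u : M} (hs : s ∈ S) (hu : u ∈ U)
    (hL : L (s + u) = z • (s + u)) : L s = z • s ∧ L u = z • u := by
  have hmap : L (u - z • L.symm u) = z • s - L s := by
    rw [map_add, smul_add] at hL
    rw [map_sub, map_smul, L.apply_symm_apply, sub_eq_sub_iff_add_eq_add, add_comm, hL]
  have hmem : L (u - z • L.symm u) ∈ L '' U ∩ S :=
    ⟨Set.mem_image_of_mem L (U.sub_mem hu (U.smul_mem z (hLU u hu))),
      hmap ▸ S.sub_mem (S.smul_mem z hs) (hLS s hs)⟩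
  rw [hSU, Set.mem_singleton_iff] at hmem
  have hs' : L s = z • s := (sub_eq_zero.1 (hmap.symm.trans hmem)).symm
  rw [map_add, smul_add, hs'] at hL
  exact ⟨hs', add_left_cancel hL⟩

variable {𝕜 E : Type*} [NormedField 𝕜] [NormedAddCommGroup E] [NormedSpace 𝕜 E]
  {L : E ≃L[𝕜] E} {S U : Submodule 𝕜 E} {z : 𝕜}

theorem injective_smul_sub_map (hcod : Codisjoint S U)
    (hLS : ∀ x ∈ S, L x ∈ S) (hLU : ∀ x ∈ U, L.symm x ∈ U)
    (hS : ∀ x ∈ S, Summable fun n : ℕ ↦ ‖L^[n] x‖)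
    (hU : ∀ x ∈ U, Summable fun n : ℕ ↦ ‖L.symm^[n] x‖)
    (hSU : L '' U ∩ S = {0}) (hz : ‖z‖ = 1) : Function.Injective fun x ↦ z • x - L x := by
  refine (injective_iff_map_eq_zero (z • LinearMap.id - (L : E →ₗ[𝕜] E))).2 fun x hx ↦ ?_
  obtain ⟨s, u, hs, hu, rfl⟩ := Submodule.codisjoint_iff_exists_add_eq.1 hcod x
  obtain ⟨hLs, hLu⟩ : L s = z • s ∧ L u = z • u :=
    map_eq_smul_of_map_add_eq_smul (L := L.toLinearEquiv) hLS hLU hSU hs hu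
      (sub_eq_zero.1 hx).symm
  have hz0 : z ≠ 0 := norm_ne_zero_iff.1 (by simp [hz])
  have hLu' : L.symm u = z⁻¹ • u := by
    rw [L.symm_apply_eq, map_smul, hLu, inv_smul_smul₀ hz0]
  rw [eq_zero_of_map_eq_smul_of_summable_iterate L hz hLs (hS s hs),
    eq_zero_of_map_eq_smul_of_summable_iterate L.symm (by simp [hz]) hLu' (hU u hu), add_zero]

theorem surjective_smul_sub_map [CompleteSpace E] (hcod : Codisjoint S U)
    (hS : ∀ x ∈ S, Summable fun n : ℕ ↦ ‖L^[n] x‖)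
    (hU : ∀ x ∈ U, Summable fun n : ℕ ↦ ‖L.symm^[n] x‖) (hz : ‖z‖ = 1) :
    Function.Surjective fun x ↦ z • x - L x := by
  intro y
  obtain ⟨s, u, hs, hu, rfl⟩ := Submodule.codisjoint_iff_exists_add_eq.1 hcod y
  obtain ⟨a, ha⟩ := exists_smul_sub_map_eq_of_summable_iterate (L : E →L[𝕜] E) hz (hS s hs)
  obtain ⟨b, hb⟩ := exists_smul_sub_map_eq_of_summable_iterate_symm L hz (hU u hu)
  refine ⟨a + b, ?_⟩
  simp only [smul_add, map_add, add_sub_add_comm, ← ha, hb, ContinuousLinearEquiv.coe_coe]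

end Splitting

theorem hyperbolic_iff_image_inter_trivial_general (L : X ≃L[ℂ] X) (S U : Submodule ℂ X)
    (hcod : Codisjoint S U) (hLS : ∀ x ∈ S, L x ∈ S) (hLU : ∀ x ∈ U, L.symm x ∈ U)
    (hS : ∀ x ∈ S, Summable fun n : ℕ ↦ ‖L^[n] x‖)
    (hU : ∀ x ∈ U, Summable fun n : ℕ ↦ ‖L.symm^[n] x‖) :
    Hyperbolic L ↔ L '' U ∩ S = {0} := by
  constructor
  · intro hL
    refine Set.eq_singleton_iff_unique_mem.2 ⟨⟨⟨0, U.zero_mem, map_zero L⟩, S.zero_mem⟩, ?_⟩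
    rintro _ ⟨⟨u, hu, rfl⟩, hLu⟩
    exact hL.map_eq_zero_of_summable_iterate (hS _ hLu) (hU u hu)
  · intro hSU
    exact (hyperbolic_iff_forall_bijective L).2 fun z hz ↦
      ⟨injective_smul_sub_map hcod hLS hLU hS hU hSU hz, surjective_smul_sub_map hcod hS hU hz⟩

theorem hyperbolic_iff_image_inter_trivial (L : X ≃L[ℂ] X) (S U : Submodule ℂ X)
    (hScl : IsClosed (S : Set X)) (hUcl : IsClosed (U : Set X)) (hcompl : IsCompl S U)
    (hLS : ∀ x ∈ S, L x ∈ S) (hLU : ∀ x ∈ U, L.symm x ∈ U)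
    (c t : ℝ) (hc : 0 < c) (ht0 : 0 < t) (ht1 : t < 1)
    (hSest : ∀ x ∈ S, ∀ n : ℕ, ‖(L ^ n) x‖ ≤ c * t ^ n * ‖x‖)
    (hUest : ∀ x ∈ U, ∀ n : ℕ, ‖(L.symm ^ n) x‖ ≤ c * t ^ n * ‖x‖) :
    Hyperbolic L ↔ (⇑L '' (U : Set X)) ∩ (S : Set X) = {0} :=
  hyperbolic_iff_image_inter_trivial_general L S U hcompl.codisjoint hLS hLU
    (fun x hx ↦ summable_norm_iterate_of_le_geometric L ht0.le ht1
      fun n ↦ (hSest x hx n).trans_eq (mul_right_comm _ _ _))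
    (fun x hx ↦ summable_norm_iterate_of_le_geometric L.symm ht0.le ht1
      fun n ↦ (hUest x hx n).trans_eq (mul_right_comm _ _ _))
end

section
/- Let X be a nonzero complex Banach space. The set of topologically transitive invertible bounded linear operators on X has empty interior in the operator-norm topology: for every invertible bounded linear operator L on X and every ε > 0 there is an invertible bounded linear operator T on X with ‖T − L‖ < ε such that T is not topologically transitive. -/
open Filter Topology

variable {X : Type*} [NormedAddCommGroup X] [NormedSpace ℂ X] [CompleteSpace X]

/-- `T` is topologically transitive (hypercyclic): some orbit is dense. -/
def TopologicallyTransitive (T : X ≃L[ℂ] X) : Prop :=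
  ∃ x : X, DenseRange (fun n : ℕ => (T ^ n) x)

/-!
If the dual of `T` has an eigenvector `ψ`, then `ψ` carries every orbit of `T` to a geometric
sequence of scalars, which is never dense; hence `T` is not transitive. Such operators are dense:
near a boundary point of the spectrum of `A` there is `μ` whose resolvent `R = (μ - A)⁻¹` has norm
larger than `δ⁻¹`, so some rank-one operator `φ ⊗ x` of norm less than `δ` satisfies `φ (R x) = 1`,
and then `φ ∘ R` is an eigenvector of the dual of `A + φ ⊗ x`. As the invertible operators form an
open set, they contain such an operator near `L`.
-/

section Orbits

variable {𝕜 : Type*} [NontriviallyNormedField 𝕜]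

lemma not_denseRange_pow_mul (μ c : 𝕜) : ¬ DenseRange (fun n : ℕ => μ ^ n * c) := by
  intro hdense
  have mem_of_isClosed {s : Set 𝕜} (hs : IsClosed s) (hmem : ∀ n : ℕ, μ ^ n * c ∈ s) (z : 𝕜) :
      z ∈ s :=
    hs.closure_subset_iff.2 (Set.range_subset_iff.2 hmem) (hdense z)
  have not_bounded : ¬ ∀ n : ℕ, ‖μ ^ n * c‖ ≤ ‖c‖ := by
    intro hbound
    obtain ⟨z, hz⟩ := NormedField.exists_lt_norm 𝕜 ‖c‖
    exact hz.not_ge (mem_of_isClosed (isClosed_le continuous_norm continuous_const) hbound z)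
  rcases le_total ‖μ‖ 1 with hμ | hμ
  · refine not_bounded fun n => ?_
    rw [norm_mul, norm_pow]
    exact mul_le_of_le_one_left (norm_nonneg c) (pow_le_one₀ (norm_nonneg μ) hμ)
  · have norm_le (n : ℕ) : ‖c‖ ≤ ‖μ ^ n * c‖ := by
      rw [norm_mul, norm_pow]
      exact le_mul_of_one_le_left (norm_nonneg c) (one_le_pow₀ hμ)
    have hc : ‖c‖ ≤ ‖(0 : 𝕜)‖ :=
      mem_of_isClosed (isClosed_le continuous_const continuous_norm) norm_le 0
    obtain rfl : c = 0 := by simpa using hc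
    exact not_bounded fun n => by simp

lemma not_denseRange_iterate_of_semiconj_mul {Y : Type*} [TopologicalSpace Y] {f : Y → Y}
    {ψ : Y → 𝕜} {μ : 𝕜} (hψ : Continuous ψ) (hψ_dense : DenseRange ψ)
    (h : Function.Semiconj ψ f (μ * ·)) (y : Y) : ¬ DenseRange (fun n : ℕ => f^[n] y) := by
  intro hdense
  have orbit_image : ψ ∘ (fun n : ℕ => f^[n] y) = fun n : ℕ => μ ^ n * ψ y := by
    funext n
    simp only [Function.comp_apply, (h.iterate_right n).eq y, mul_left_iterate]
  exact not_denseRange_pow_mul μ (ψ y) (orbit_image ▸ hψ_dense.comp hdense hψ)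

end Orbits

lemma not_topologicallyTransitive_of_dual_eigenvector {E : Type*} [NormedAddCommGroup E]
    [NormedSpace ℂ E] {T : E ≃L[ℂ] E} {ψ : E →L[ℂ] ℂ} {μ : ℂ} (hψ : ψ ≠ 0)
    (h : ψ ∘L (T : E →L[ℂ] E) = μ • ψ) : ¬ TopologicallyTransitive T := by
  rintro ⟨x, hx⟩
  have ψ_surjective : Function.Surjective ψ :=
    LinearMap.surjective (f := ψ.toLinearMap) (by exact_mod_cast hψ)
  have semiconj : Function.Semiconj ψ T (μ * ·) := fun y => by
    simpa using DFunLike.congr_fun h y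
  refine not_denseRange_iterate_of_semiconj_mul ψ.continuous ψ_surjective.denseRange semiconj x ?_
  have pow_apply (n : ℕ) : (T ^ n) x = T^[n] x :=
    congrFun (hom_coe_pow (fun S : E ≃L[ℂ] E => (S : E → E)) rfl (fun _ _ => rfl) T n) x
  simpa only [pow_apply] using hx

section Resolvent

variable {𝕜 A : Type*} [NormedField 𝕜] [NormedRing A] [NormedAlgebra 𝕜 A] [NormOneClass A]

lemma inv_norm_resolvent_le_dist [HasSummableGeomSeries A] {a : A} {z μ : 𝕜}
    (hz : z ∈ spectrum 𝕜 a) (hμ : μ ∈ resolventSet 𝕜 a) : ‖resolvent a μ‖⁻¹ ≤ dist z μ := by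
  obtain ⟨u, hu⟩ := spectrum.mem_resolventSet_iff.1 hμ
  rw [resolvent, ← hu, Ring.inverse_unit]
  by_contra! hlt
  refine spectrum.mem_iff.1 hz (Units.ofNearby u (algebraMap 𝕜 A z - a) ?_).isUnit
  rwa [hu, sub_sub_sub_cancel_right, ← map_sub, norm_algebraMap', ← dist_eq_norm]

lemma exists_inv_lt_norm_resolvent_of_mem_frontier [CompleteSpace A] {a : A} {z : 𝕜}
    (hz : z ∈ frontier (spectrum 𝕜 a)) {δ : ℝ} (hδ : 0 < δ) :
    ∃ μ ∈ resolventSet 𝕜 a, δ⁻¹ < ‖resolvent a μ‖ := by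
  rw [frontier_eq_closure_inter_closure, (spectrum.isClosed a).closure_eq] at hz
  obtain ⟨μ, hμ_compl, hdist⟩ := Metric.mem_closure_iff.1 hz.2 δ hδ
  have hμ : μ ∈ resolventSet 𝕜 a := Set.notMem_compl_iff.1 hμ_compl
  have : Nontrivial A := NormOneClass.nontrivial
  have hpos : 0 < ‖resolvent a μ‖ := norm_pos_iff.2 (spectrum.isUnit_resolvent.1 hμ).ne_zero
  exact ⟨μ, hμ, inv_lt_of_inv_lt₀ hpos ((inv_norm_resolvent_le_dist hz.1 hμ).trans_lt hdist)⟩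

end Resolvent

lemma frontier_spectrum_nonempty {A : Type*} [NormedRing A] [NormedAlgebra ℂ A] [CompleteSpace A]
    [Nontrivial A] (a : A) : (frontier (spectrum ℂ a)).Nonempty :=
  nonempty_frontier_iff.2 ⟨spectrum.nonempty a, (spectrum.isCompact a).ne_univ⟩

lemma exists_smulRight_norm_lt_of_inv_lt_opNorm {𝕜 E F : Type*} [RCLike 𝕜]
    [SeminormedAddCommGroup E] [NormedSpace 𝕜 E] [SeminormedAddCommGroup F] [NormedSpace 𝕜 F]
    (R : E →L[𝕜] F) {δ : ℝ} (hδ : 0 < δ) (hR : δ⁻¹ < ‖R‖) :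
    ∃ (φ : F →L[𝕜] 𝕜) (x : E), φ (R x) = 1 ∧ ‖φ.smulRight x‖ < δ := by
  obtain ⟨x, hx⟩ := R.exists_mul_lt_of_lt_opNorm (inv_pos.2 hδ).le hR
  have hRx : 0 < ‖R x‖ := lt_of_le_of_lt (by positivity) hx
  obtain ⟨φ, hφ_norm, hφ⟩ := exists_dual_vector 𝕜 (R x) hRx.ne'
  refine ⟨(‖R x‖ : 𝕜)⁻¹ • φ, x, ?_, ?_⟩
  · simp [hφ, hRx.ne']
  · calc ‖((‖R x‖ : 𝕜)⁻¹ • φ).smulRight x‖ = ‖R x‖⁻¹ * ‖x‖ := by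
          simp [ContinuousLinearMap.norm_smulRight_apply, norm_smul, hφ_norm]
      _ < δ := by rwa [inv_mul_lt_iff₀ hRx, mul_comm, ← inv_mul_lt_iff₀ hδ]

lemma comp_add_smulRight_eq_smul {𝕜 E : Type*} [CommRing 𝕜] [TopologicalSpace 𝕜]
    [ContinuousMul 𝕜] [AddCommGroup E] [TopologicalSpace E] [IsTopologicalAddGroup E]
    [Module 𝕜 E] [ContinuousSMul 𝕜 E] {A R : E →L[𝕜] E} {μ : 𝕜}
    (hR : R * (algebraMap 𝕜 (E →L[𝕜] E) μ - A) = 1) {φ : E →L[𝕜] 𝕜} {x : E}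
    (hφ : φ (R x) = 1) : (φ ∘L R) ∘L (A + φ.smulRight x) = μ • (φ ∘L R) := by
  ext y
  have resolvent_eq : μ * φ (R y) - φ (R (A y)) = φ y := by
    simpa [Algebra.algebraMap_eq_smul_one] using congrArg φ (DFunLike.congr_fun hR y)
  calc φ (R (A y + φ y • x)) = φ (R (A y)) + φ y := by simp [hφ]
    _ = μ * φ (R y) := by rw [← resolvent_eq, add_sub_cancel]

lemma dense_setOf_exists_dual_eigenvector {E : Type*} [NormedAddCommGroup E] [NormedSpace ℂ E]
    [CompleteSpace E] [Nontrivial E] :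
    Dense {T : E →L[ℂ] E | ∃ ψ : E →L[ℂ] ℂ, ψ ≠ 0 ∧ ∃ μ : ℂ, ψ ∘L T = μ • ψ} := by
  refine Metric.dense_iff.2 fun A δ hδ => ?_
  obtain ⟨z, hz⟩ := frontier_spectrum_nonempty A
  obtain ⟨μ, hμ, hR⟩ := exists_inv_lt_norm_resolvent_of_mem_frontier hz hδ
  obtain ⟨φ, x, hφ, hnorm⟩ := exists_smulRight_norm_lt_of_inv_lt_opNorm (resolvent A μ) hδ hR
  refine ⟨A + φ.smulRight x, by simpa [dist_eq_norm] using hnorm, φ ∘L resolvent A μ, ?_, μ,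
    comp_add_smulRight_eq_smul (Ring.inverse_mul_cancel _ hμ) hφ⟩
  intro hzero
  exact one_ne_zero (hφ.symm.trans (DFunLike.congr_fun hzero x))

/-- The set of transitive operators has empty interior in the operator norm
topology. -/
theorem transitive_empty_interior [Nontrivial X] (L : X ≃L[ℂ] X)
    (ε : ℝ) (hε : 0 < ε) :
    ∃ T : X ≃L[ℂ] X, ‖(T : X →L[ℂ] X) - (L : X →L[ℂ] X)‖ < ε ∧
      ¬ TopologicallyTransitive T := by
  have isOpen_nearby_equivs : IsOpen (Metric.ball (L : X →L[ℂ] X) ε ∩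
      Set.range ((↑) : (X ≃L[ℂ] X) → X →L[ℂ] X)) :=
    Metric.isOpen_ball.inter ContinuousLinearEquiv.isOpen
  obtain ⟨_, ⟨ψ, hψ, μ, hψμ⟩, hnear, T, rfl⟩ :=
    dense_setOf_exists_dual_eigenvector.exists_mem_open isOpen_nearby_equivs
      ⟨L, Metric.mem_ball_self hε, L, rfl⟩
  exact ⟨T, mem_ball_iff_norm.1 hnear, not_topologicallyTransitive_of_dual_eigenvector hψ hψμ⟩
end

section
/- Let X be a complex Banach space and L an invertible bounded linear operator on X. Then L has the shadowing property if and only if Shad(L) < ∞, i.e. if and only if L admits a shadowableness constant. -/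
open Filter Topology

variable {X : Type*} [NormedAddCommGroup X] [NormedSpace ℂ X] [CompleteSpace X]

/-- `K` is a shadowableness constant of `L`. -/
def ShadowablenessConstant (L : X ≃L[ℂ] X) (K : ℝ) : Prop :=
  0 < K ∧ ∀ z : ℤ → X, (∃ M, ∀ n : ℤ, ‖z n‖ ≤ M) →
    ∃ y : ℤ → X, (∀ n : ℤ, ‖y n‖ ≤ K * ⨆ n : ℤ, ‖z n‖) ∧
      ∀ n : ℤ, y (n + 1) = L (y n) + z n

/-!
The error of `x` as an orbit of `L` is the sequence `z n = L (x n) - x (n + 1)`. A point `p` shadows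
`x` within `ε` iff the correction `y n = L ^ n p - x n`, which solves `y (n + 1) = L (y n) + z n`,
is bounded by `ε`. As `L` is invertible, every two-sided sequence `z` is the error of some `x`, so
shadowing says that for every `ε > 0` there is `δ > 0` such that every `z` bounded by `δ` admits a
solution `y` bounded by `ε`. By homogeneity only the ratio `ε / δ` matters, and any one attainable
ratio is a shadowableness constant.
-/

theorem exists_forall_add_one_eq_apply {α : Type*} [Nonempty α] (f : ℤ → Equiv.Perm α) :
    ∃ x : ℤ → α, ∀ n, x (n + 1) = f n (x n) := by
  let x (n : ℤ) : α := Int.inductionOn' n 0 (Classical.arbitrary α) (fun k _ a => f k a)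
    (fun k _ a => (f (k - 1)).symm a)
  refine ⟨x, fun n => ?_⟩
  rcases le_or_gt 0 n with hn | hn
  · exact Int.inductionOn'_add_one hn
  · have hpred : x (n + 1 - 1) = (f (n + 1 - 1)).symm (x (n + 1)) := Int.inductionOn'_sub_one hn
    rw [add_sub_cancel_right] at hpred
    rw [hpred, Equiv.apply_symm_apply]

theorem surjective_apply_sub_apply_add_one {A : Type*} [AddCommGroup A] (f : Equiv.Perm A) :
    Function.Surjective fun (x : ℤ → A) (n : ℤ) => f (x n) - x (n + 1) := by
  intro z
  obtain ⟨x, hx⟩ := exists_forall_add_one_eq_apply fun n => f.trans (Equiv.subRight (z n))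
  refine ⟨x, funext fun n => ?_⟩
  simp [hx]

section MulAction

variable {G α : Type*} [Group G] [MulAction G α]

theorem zpow_add_one_smul (g : G) (n : ℤ) (a : α) : g ^ (n + 1) • a = g • g ^ n • a := by
  rw [add_comm, zpow_one_add, mul_smul]

theorem zpow_smul_eq_of_forall_add_one_eq_smul {g : G} {u : ℤ → α}
    (hu : ∀ n, u (n + 1) = g • u n) (n : ℤ) : g ^ n • u 0 = u n := by
  induction n using Int.induction_on with
  | zero => simp
  | succ k ih => rw [zpow_add_one_smul, ih, hu]
  | pred k ih =>
    apply smul_left_cancel g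
    rw [← zpow_add_one_smul, ← hu, sub_add_cancel, ih]

end MulAction

section Seminormed

variable {V : Type*} [SeminormedAddCommGroup V] [NormedSpace ℝ V]

/-- The shadowing property of a linear bijection `L` of a real seminormed space, which need not be
continuous. -/
def HasShadowing (L : V ≃ₗ[ℝ] V) : Prop :=
  ∀ ε > (0 : ℝ), ∃ δ > (0 : ℝ), ∀ x : ℤ → V,
    (∀ n, ‖L (x n) - x (n + 1)‖ ≤ δ) → ∃ p : V, ∀ n, ‖(L ^ n) p - x n‖ ≤ ε

/-- `K` is a shadowableness constant of a linear bijection `L` of a real seminormed space, which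
need not be continuous. The boundedness of `z` keeps the supremum from being a junk value. -/
def IsShadowablenessConstant (L : V ≃ₗ[ℝ] V) (K : ℝ) : Prop :=
  0 < K ∧ ∀ z : ℤ → V, (∃ M, ∀ n, ‖z n‖ ≤ M) →
    ∃ y : ℤ → V, (∀ n, ‖y n‖ ≤ K * ⨆ n, ‖z n‖) ∧ ∀ n, y (n + 1) = L (y n) + z n

/-- The inhomogeneous equation `y (n + 1) = L (y n) + z n` has a solution bounded by `ε` whenever
`z` is bounded by `δ`. Both the shadowing property and shadowableness constants are expressed in
terms of this condition. -/
def HasBoundedSolutions (L : V ≃ₗ[ℝ] V) (δ ε : ℝ) : Prop :=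
  ∀ z : ℤ → V, (∀ n, ‖z n‖ ≤ δ) →
    ∃ y : ℤ → V, (∀ n, ‖y n‖ ≤ ε) ∧ ∀ n, y (n + 1) = L (y n) + z n

theorem exists_forall_norm_zpow_sub_le_iff {L : V ≃ₗ[ℝ] V} {x : ℤ → V} {ε : ℝ} :
    (∃ p : V, ∀ n : ℤ, ‖(L ^ n) p - x n‖ ≤ ε) ↔
      ∃ y : ℤ → V, (∀ n, ‖y n‖ ≤ ε) ∧ ∀ n, y (n + 1) = L (y n) + (L (x n) - x (n + 1)) := by
  constructor
  · rintro ⟨p, hp⟩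
    refine ⟨fun n => (L ^ n) p - x n, hp, fun n => ?_⟩
    have horbit : (L ^ (n + 1)) p = L ((L ^ n) p) := zpow_add_one_smul L n p
    simp [horbit]
  · rintro ⟨y, hy, hyL⟩
    have hrec (n : ℤ) : y (n + 1) + x (n + 1) = L (y n + x n) := by
      rw [hyL, map_add]
      abel
    have horbit (n : ℤ) : (L ^ n) (y 0 + x 0) = y n + x n :=
      zpow_smul_eq_of_forall_add_one_eq_smul (g := L) (u := fun n => y n + x n) hrec n
    exact ⟨y 0 + x 0, fun n => by simpa [horbit] using hy n⟩

theorem hasShadowing_iff_hasBoundedSolutions {L : V ≃ₗ[ℝ] V} :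
    HasShadowing L ↔ ∀ ε > 0, ∃ δ > 0, HasBoundedSolutions L δ ε := by
  refine forall₂_congr fun ε _ => exists_congr fun δ => and_congr_right fun _ => ?_
  simp only [exists_forall_norm_zpow_sub_le_iff]
  refine ⟨fun h z hz => ?_, fun h x hx => h _ hx⟩
  obtain ⟨x, rfl⟩ := surjective_apply_sub_apply_add_one L.toEquiv z
  exact h x hz

end Seminormed

section Normed

variable {V : Type*} [NormedAddCommGroup V] [NormedSpace ℝ V] {L : V ≃ₗ[ℝ] V} {δ ε c K : ℝ}

theorem HasBoundedSolutions.mul_left (h : HasBoundedSolutions L δ ε) (hc : 0 ≤ c) :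
    HasBoundedSolutions L (c * δ) (c * ε) := by
  intro z hz
  rcases hc.eq_or_lt with rfl | hc
  · have hz0 (n : ℤ) : z n = 0 := by simpa using hz n
    exact ⟨0, by simp, by simp [hz0]⟩
  · have hz' (n : ℤ) : ‖c⁻¹ • z n‖ ≤ δ := by
      rw [norm_smul, Real.norm_of_nonneg (inv_nonneg.2 hc.le)]
      exact (inv_mul_le_iff₀ hc).2 (hz n)
    obtain ⟨y, hy, hyL⟩ := h (fun n => c⁻¹ • z n) hz'
    refine ⟨fun n => c • y n, fun n => ?_, fun n => ?_⟩
    · rw [norm_smul, Real.norm_of_nonneg hc.le]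
      gcongr
      exact hy n
    · simp only [hyL, smul_add, smul_inv_smul₀ hc.ne', map_smul]

theorem isShadowablenessConstant_iff_hasBoundedSolutions :
    IsShadowablenessConstant L K ↔ 0 < K ∧ HasBoundedSolutions L 1 K := by
  refine and_congr_right fun hK => ⟨fun h z hz => ?_, fun h z ⟨M, hM⟩ => ?_⟩
  · obtain ⟨y, hy, hyL⟩ := h z ⟨1, hz⟩
    exact ⟨y, fun n => (hy n).trans (mul_le_of_le_one_right hK.le (ciSup_le hz)), hyL⟩
  · have hbdd : BddAbove (Set.range fun n => ‖z n‖) := ⟨M, Set.forall_mem_range.2 hM⟩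
    have hsup : 0 ≤ ⨆ n, ‖z n‖ := Real.iSup_nonneg fun n => norm_nonneg (z n)
    rw [mul_comm K]
    exact h.mul_left hsup z fun n => by simpa using le_ciSup hbdd n

theorem shadowing_iff_shadowablenessConstant_general (L : V ≃ₗ[ℝ] V) :
    HasShadowing L ↔ ∃ K : ℝ, IsShadowablenessConstant L K := by
  simp only [hasShadowing_iff_hasBoundedSolutions,
    isShadowablenessConstant_iff_hasBoundedSolutions]
  constructor
  · intro h
    obtain ⟨δ, hδ, hL⟩ := h 1 one_pos
    exact ⟨δ⁻¹, inv_pos.2 hδ, by simpa [hδ.ne'] using hL.mul_left (inv_nonneg.2 hδ.le)⟩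
  · rintro ⟨K, hK, hL⟩ ε hε
    have hδ : 0 < ε / K := div_pos hε hK
    exact ⟨ε / K, hδ, by simpa [hK.ne'] using hL.mul_left hδ.le⟩

end Normed

section Complex

variable {V : Type*} [NormedAddCommGroup V] [NormedSpace ℂ V]

theorem restrictScalars_toLinearEquiv_zpow_apply (L : V ≃L[ℂ] V) (n : ℤ) (v : V) :
    (L.toLinearEquiv.restrictScalars ℝ ^ n) v = (L ^ n) v :=
  let toReal : (V ≃L[ℂ] V) →* V ≃ₗ[ℝ] V :=
    MonoidHom.mk' (fun L => L.toLinearEquiv.restrictScalars ℝ) fun _ _ => rfl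
  (LinearEquiv.congr_fun (map_zpow toReal L n) v).symm

theorem hasShadowing_restrictScalars_iff {L : V ≃L[ℂ] V} :
    HasShadowing (L.toLinearEquiv.restrictScalars ℝ) ↔ ShadowingProperty L := by
  simp only [HasShadowing, restrictScalars_toLinearEquiv_zpow_apply]
  rfl

end Complex

/-- `L` has the shadowing property iff it admits a shadowableness constant. -/
theorem shadowing_iff_shadowablenessConstant (L : X ≃L[ℂ] X) :
    ShadowingProperty L ↔ ∃ K : ℝ, ShadowablenessConstant L K := by
  rw [← hasShadowing_restrictScalars_iff]
  exact shadowing_iff_shadowablenessConstant_general (L.toLinearEquiv.restrictScalars ℝ)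
end
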